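/- arXiv:2512.00337 — 2 statements merged into one kernel-verified Lean document; each statement's English description precedes it below -/
import Mathlib

section
/- Let K = ℚ(√d₁, √d₂) be a biquadratic field with d₁, d₂ odd squarefree, and let G ⊆ ℂ be the field G = ℚ(√(p*) : p prime dividing d₁d₂) if d₁ ≡ d₂ ≡ 1 (mod 4), and G = ℚ({√(p*) : p prime dividing d₁d₂} ∪ {√−1}) otherwise, where p* = (−1)^{(p−1)/2} p. Then the degree of G over K equals 2^{ω(|Δ_K|) − 2}, where Δ_K is the discriminant of K and ω(m) denotes the number of distinct prime divisors of m. -/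
open IntermediateField NumberField
noncomputable section
def biquad (d₁ d₂ : ℤ) : IntermediateField ℚ ℂ :=
  IntermediateField.adjoin ℚ {x : ℂ | x ^ 2 = (d₁ : ℂ) ∨ x ^ 2 = (d₂ : ℂ)}
def genusGens (d₁ d₂ : ℤ) : Set ℂ :=
  {x : ℂ | ∃ p : ℕ, p.Prime ∧ (p : ℤ) ∣ d₁ * d₂ ∧
    x ^ 2 = (-1 : ℂ) ^ ((p - 1) / 2) * (p : ℂ)}
def genusField (d₁ d₂ : ℤ) : IntermediateField ℚ ℂ :=
  if d₁ % 4 = 1 ∧ d₂ % 4 = 1 then IntermediateField.adjoin ℚ (genusGens d₁ d₂)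
  else IntermediateField.adjoin ℚ (genusGens d₁ d₂ ∪ {x : ℂ | x ^ 2 = -1})


lemma ram_crit (K : Type*) [Field K] [NumberField K] (p : ℤ) (hp : Prime p)
    (H : ∀ P : Ideal (𝓞 K), P.IsPrime → (p : 𝓞 K) ∈ P → (p : 𝓞 K) ∈ P ^ 2) : p ∣ discr K := by
  by_contra hcon
  have h := (not_dvd_discr_iff_forall_mem K (𝓞 K) hp).1 hcon
  have hm : ((Ideal.span {p}).map (algebraMap ℤ (𝓞 K))) ≠ ⊤ := by
    intro h
    rw [Ideal.map_span, Set.image_singleton, Ideal.span_singleton_eq_top] at h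
    have h2 := h.map (Algebra.norm ℤ)
    rw [Algebra.norm_algebraMap] at h2
    exact hp.not_isUnit ((isUnit_pow_iff (Module.finrank_pos.ne')).1 h2)
  obtain ⟨P, hP, hle⟩ := Ideal.exists_le_maximal _ hm
  have hpP : (p : 𝓞 K) ∈ P := hle (Ideal.mem_map_of_mem _ (Ideal.mem_span_singleton_self p))
  have h1 := h P hP.isPrime hpP
  have h2 := H P hP.isPrime hpP
  have hP0 : P ≠ ⊥ := by
    rintro rfl
    rw [Ideal.mem_bot] at hpP
    exact hp.ne_zero (by exact_mod_cast hpP)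
  have := hP.isPrime
  rw [← not_dvd_differentIdeal_iff] at h1
  apply h1
  have hpm : (Ideal.span {p}).IsMaximal :=
    PrincipalIdealRing.isMaximal_of_irreducible hp.irreducible
  have := pow_sub_one_dvd_differentIdeal ℤ (p := Ideal.span {p}) P 2 (by simp [hp.ne_zero]) (by
    rw [Ideal.dvd_iff_le, Ideal.map_span, Set.image_singleton, Ideal.span_singleton_le_iff_mem]
    simpa using h2)
  simpa using this

lemma ram_odd (K : Type*) [Field K] [NumberField K] (p : ℤ) (hp : Prime p) (d : ℤ) (hd : Squarefree d)
    (hpd : p ∣ d) (α : K) (hα : α ^ 2 = (d : K)) : p ∣ discr K := by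
  apply ram_crit K p hp
  intro P hP hpP
  have hi : IsIntegral ℤ α := by
    apply IsIntegral.of_pow (n := 2) (by norm_num)
    rw [hα]; exact isIntegral_algebraMap (R := ℤ)
  obtain ⟨a, ha⟩ : ∃ a : 𝓞 K, algebraMap (𝓞 K) K a = α := ⟨⟨α, hi⟩, rfl⟩
  have ha2 : a ^ 2 = (d : 𝓞 K) := by
    apply RingOfIntegers.coe_injective; rw [map_pow, map_intCast, ha, hα]
  obtain ⟨m, rfl⟩ := hpd
  have haP : a ∈ P := by
    apply hP.mem_of_pow_mem 2
    rw [ha2]; push_cast; exact P.mul_mem_right _ hpP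
  have hcop : IsCoprime m p := by
    refine (hp.coprime_iff_not_dvd.2 ?_).symm
    rintro ⟨k, rfl⟩
    exact hp.not_isUnit (hd p ⟨k, by ring⟩)
  obtain ⟨u, v, huv⟩ := hcop
  have : (p : 𝓞 K) = u * a ^ 2 + v * (p : 𝓞 K) ^ 2 := by
    rw [ha2]; exact_mod_cast (by linear_combination (-p) * huv : p = u * (p * m) + v * p ^ 2)
  rw [this]
  exact add_mem (Ideal.mul_mem_left _ _ (Ideal.pow_mem_pow haP 2)) (Ideal.mul_mem_left _ _ (Ideal.pow_mem_pow hpP 2))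

lemma ram_two (K : Type*) [Field K] [NumberField K] (d : ℤ) 
    (hpd : d % 4 = 3) (α : K) (hα : α ^ 2 = (d : K)) : 2 ∣ discr K := by
  apply ram_crit K 2 Int.prime_two
  intro P hP hpP
  have hi : IsIntegral ℤ α := by
    apply IsIntegral.of_pow (n := 2) (by norm_num)
    rw [hα]; exact isIntegral_algebraMap (R := ℤ)
  obtain ⟨a, ha⟩ : ∃ a : 𝓞 K, algebraMap (𝓞 K) K a = α := ⟨⟨α, hi⟩, rfl⟩
  have ha2 : a ^ 2 = (d : 𝓞 K) := by
    apply RingOfIntegers.coe_injective; rw [map_pow, map_intCast, ha, hα]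
  obtain ⟨m, rfl⟩ : ∃ m, d = 4 * m + 3 := ⟨d / 4, by omega⟩
  push_cast at ha2 hpP ⊢
  have haP : 1 + a ∈ P := by
    apply hP.mem_of_pow_mem 2
    have : (1 + a) ^ 2 = (2 * m + 2 + a) * 2 := by linear_combination ha2
    rw [this]; exact P.mul_mem_left _ hpP
  have : (2 : 𝓞 K) = (-a) * (1 + a) ^ 2 + ((m+1)*(2+a)) * 2 ^ 2 := by
    linear_combination (2 + a) * ha2
  rw [this]
  exact add_mem (Ideal.mul_mem_left _ _ (Ideal.pow_mem_pow haP 2)) (Ideal.mul_mem_left _ _ (Ideal.pow_mem_pow hpP 2))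

lemma not_rat (K : Type*) [Field K] [CharZero K] [Algebra ℚ K] (n : ℤ) (hn : ¬ IsSquare n) (x : K) (hx : x ^ 2 = (n : K)) :
    x ∉ (algebraMap ℚ K).range := by
  rintro ⟨q, rfl⟩
  apply hn
  rw [← Rat.isSquare_intCast_iff]
  refine ⟨q, ?_⟩
  apply (algebraMap ℚ K).injective
  rw [map_mul, ← pow_two, hx, map_intCast]

lemma trace_sqrt (K : Type*) [Field K] [NumberField K] (n : ℤ) (hn : ¬ IsSquare n) (x : K) (hx : x ^ 2 = (n : K)) :
    Algebra.trace ℚ K x = 0 := by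
  have h := not_rat K n hn x hx
  have hmin : minpoly ℚ x = Polynomial.X ^ 2 - Polynomial.C (n : ℚ) := by
    symm
    apply minpoly.eq_of_irreducible_of_monic
    · rw [Polynomial.irreducible_iff_roots_eq_zero_of_degree_le_three]
      · rw [Multiset.eq_zero_iff_forall_notMem]
        intro q hq
        rw [Polynomial.mem_roots'] at hq
        have := hq.2
        simp [sub_eq_zero] at this
        apply hn
        rw [← Rat.isSquare_intCast_iff]
        exact ⟨q, by rw [← this]; ring⟩
      · rw [Polynomial.natDegree_X_pow_sub_C]
      · rw [Polynomial.natDegree_X_pow_sub_C]; norm_num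
    · simp [hx]
    · exact Polynomial.monic_X_pow_sub_C _ (by norm_num)
  rw [trace_eq_finrank_mul_minpoly_nextCoeff, hmin]
  rw [Polynomial.nextCoeff, Polynomial.natDegree_X_pow_sub_C]
  simp [-map_intCast, -eq_intCast, Polynomial.coeff_X_pow, Polynomial.coeff_C]

lemma discr_dvd_of (K : Type*) [Field K] [NumberField K] (hK : Module.finrank ℚ K = 4)
    (b : Fin 4 → K) (hb : ∀ i, IsIntegral ℤ (b i)) (N : ℤ) (hN : Algebra.discr ℚ b = N) :
    discr K ∣ N := by
  have hc : Fintype.card (Module.Free.ChooseBasisIndex ℤ (𝓞 K)) = 4 := by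
    rw [← Module.finrank_eq_card_chooseBasisIndex, RingOfIntegers.rank, hK]
  let e := Fintype.equivFinOfCardEq hc
  let B := (RingOfIntegers.basis K).reindex e
  let b' : Fin 4 → 𝓞 K := fun i => ⟨b i, hb i⟩
  have h1 : Algebra.discr ℤ B = discr K := discr_eq_discr K B
  have h2 : Algebra.discr ℤ b' = (B.toMatrix b').det ^ 2 * Algebra.discr ℤ B := by
    rw [← Algebra.discr_of_matrix_vecMul]
    congr 1
    exact (B.toMatrix_map_vecMul b').symm
  have h3 : Algebra.discr ℚ b = ((Algebra.discr ℤ b' : ℤ) : ℚ) := by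
    rw [Algebra.discr_def, Algebra.discr_def]
    rw [← eq_intCast (Int.castRingHom ℚ), RingHom.map_det]
    congr 1
    ext i j
    simp only [RingHom.mapMatrix_apply, Matrix.map_apply, Algebra.traceMatrix_apply, Algebra.traceForm_apply]
    exact (Algebra.trace_localization ℤ (nonZeroDivisors ℤ) (Rₘ := ℚ) (Sₘ := K) (b' i * b' j)).symm ▸ rfl
  rw [hN] at h3
  have h4 : N = Algebra.discr ℤ b' := by exact_mod_cast h3
  rw [h4, h2, h1]
  exact Dvd.intro_left _ rfl

lemma discr_basis (K : Type*) [Field K] [NumberField K] (hK : Module.finrank ℚ K = 4)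
    (d₁ d₂ : ℤ) (h1 : ¬ IsSquare d₁) (h2 : ¬ IsSquare d₂) (h3 : ¬ IsSquare (d₁ * d₂))
    (α β : K) (hα : α ^ 2 = (d₁ : K)) (hβ : β ^ 2 = (d₂ : K)) :
    Algebra.discr ℚ ![1, α, β, α * β] = 256 * d₁ ^ 2 * d₂ ^ 2 := by
  have t1 := trace_sqrt K d₁ h1 α hα
  have t2 := trace_sqrt K d₂ h2 β hβ
  have t3 := trace_sqrt K (d₁ * d₂) h3 (α * β) (by push_cast; rw [mul_pow, hα, hβ])
  have tm : ∀ (n : ℤ) (x : K), Algebra.trace ℚ K ((n : K) * x) = n * Algebra.trace ℚ K x := by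
    intro n x
    rw [← map_intCast (algebraMap ℚ K), ← Algebra.smul_def, map_smul, smul_eq_mul]
  have t0 : Algebra.trace ℚ K 1 = 4 := by
    rw [← map_one (algebraMap ℚ K), Algebra.trace_algebraMap, hK]; simp
  have tn : ∀ n : ℤ, Algebra.trace ℚ K (n : K) = 4 * n := by
    intro n
    rw [← mul_one (n : K), tm, t0]; ring
  have e1 : α * α = (d₁ : K) := by rw [← pow_two, hα]
  have e2 : β * β = (d₂ : K) := by rw [← pow_two, hβ]
  have e3 : α * (α * β) = d₁ * β := by rw [← e1]; ring
  have e4 : β * (α * β) = d₂ * α := by rw [← e2]; ring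
  have e5 : α * β * (α * β) = d₁ * d₂ := by rw [← e1, ← e2]; ring
  have hm : Algebra.traceMatrix ℚ ![1, α, β, α * β] =
      Matrix.diagonal ![4, 4 * (d₁ : ℚ), 4 * d₂, 4 * (d₁ * d₂)] := by
    ext i j
    rw [Algebra.traceMatrix_apply, Algebra.traceForm_apply]
    fin_cases i <;> fin_cases j <;>
      simp [-map_mul, t0, t1, t2, t3, e1, e2, e3, e4, e5, mul_comm β α, mul_comm (α * β) α, mul_comm (α * β) β, tm, tn] <;> ring
  rw [Algebra.discr_def, hm, Matrix.det_diagonal]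
  simp [Fin.prod_univ_four]
  ring

lemma sqrt_int (K : Type*) [Field K] (d : ℤ) (α : K) (hα : α ^ 2 = (d : K)) : IsIntegral ℤ α := by
  apply IsIntegral.of_pow (n := 2) (by norm_num)
  rw [hα]; exact isIntegral_algebraMap (R := ℤ)

lemma half_int (K : Type*) [Field K] [CharZero K] (d : ℤ) (hd : d % 4 = 1) (α : K) (hα : α ^ 2 = (d : K)) :
    IsIntegral ℤ ((1 + α) / 2) := by
  obtain ⟨m, rfl⟩ : ∃ m, d = 4 * m + 1 := ⟨d / 4, by omega⟩
  refine ⟨Polynomial.X ^ 2 - Polynomial.X - Polynomial.C m, ?_, ?_⟩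
  · monicity!
  · rw [Polynomial.eval₂_sub, Polynomial.eval₂_sub, Polynomial.eval₂_C, Polynomial.eval₂_X_pow, Polynomial.eval₂_X]
    push_cast at hα
    rw [eq_intCast]
    linear_combination hα / 4

lemma discr_dvd_gen (K : Type*) [Field K] [NumberField K] (hK : Module.finrank ℚ K = 4)
    (d₁ d₂ : ℤ) (h1 : ¬ IsSquare d₁) (h2 : ¬ IsSquare d₂) (h3 : ¬ IsSquare (d₁ * d₂))
    (α β : K) (hα : α ^ 2 = (d₁ : K)) (hβ : β ^ 2 = (d₂ : K)) :
    discr K ∣ 256 * d₁ ^ 2 * d₂ ^ 2 := by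
  apply discr_dvd_of K hK ![1, α, β, α * β] 
  · intro i
    have := sqrt_int K d₁ α hα
    have := sqrt_int K d₂ β hβ
    fin_cases i <;> simp [isIntegral_one, *, IsIntegral.mul]
  · rw [discr_basis K hK d₁ d₂ h1 h2 h3 α β hα hβ]; push_cast; rfl

lemma discr_dvd_one (K : Type*) [Field K] [NumberField K] (hK : Module.finrank ℚ K = 4)
    (d₁ d₂ : ℤ) (h1 : ¬ IsSquare d₁) (h2 : ¬ IsSquare d₂) (h3 : ¬ IsSquare (d₁ * d₂))
    (α β : K) (hα : α ^ 2 = (d₁ : K)) (hβ : β ^ 2 = (d₂ : K)) (m1 : d₁ % 4 = 1) (m2 : d₂ % 4 = 1) :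
    discr K ∣ d₁ ^ 2 * d₂ ^ 2 := by
  have ha := half_int K d₁ m1 α hα
  have hb := half_int K d₂ m2 β hβ
  apply discr_dvd_of K hK ![1, (1 + α) / 2, (1 + β) / 2, ((1 + α) / 2) * ((1 + β) / 2)]
  · intro i
    fin_cases i <;> simp [isIntegral_one, ha, hb, IsIntegral.mul]
  · let P : Matrix (Fin 4) (Fin 4) ℚ := !![1,0,0,0; 1/2,1/2,0,0; 1/2,0,1/2,0; 1/4,1/4,1/4,1/4]
    have : ![1, (1 + α) / 2, (1 + β) / 2, ((1 + α) / 2) * ((1 + β) / 2)] =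
        Matrix.mulVec (P.map (algebraMap ℚ K)) ![1, α, β, α * β] := by
      ext i
      fin_cases i <;> simp [P, Matrix.mulVec, dotProduct, Fin.sum_univ_four] <;> ring
    rw [this, Algebra.discr_of_matrix_mulVec, discr_basis K hK d₁ d₂ h1 h2 h3 α β hα hβ]
    have : P.det = 1 / 16 := by
      simp [P, Matrix.det_succ_row_zero, Fin.sum_univ_succ, Fin.succAbove]
      norm_num
    rw [this]; push_cast; ring

lemma mem_quad (F : IntermediateField ℚ ℂ) (a : ℂ) (ha : a ^ 2 ∈ F) (x : ℂ) (hx : x ∈ F⟮a⟯) :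
    ∃ u ∈ F, ∃ v ∈ F, x = u + v * a := by
  have hroot : Polynomial.aeval a (Polynomial.X ^ 2 - Polynomial.C (⟨a ^ 2, ha⟩ : F)) = 0 := by
    simp [IntermediateField.algebraMap_apply]
  have hmon : (Polynomial.X ^ 2 - Polynomial.C (⟨a ^ 2, ha⟩ : F)).Monic :=
    Polynomial.monic_X_pow_sub_C _ (by norm_num)
  have hint : IsIntegral F a := ⟨_, hmon, hroot⟩
  rw [← IntermediateField.mem_toSubalgebra, IntermediateField.adjoin_simple_toSubalgebra_of_isAlgebraic hint.isAlgebraic,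
    Algebra.adjoin_singleton_eq_range_aeval] at hx
  obtain ⟨p, hp⟩ := hx
  have hp : Polynomial.aeval a p = x := hp
  rw [← Polynomial.aeval_modByMonic_eq_self_of_root hroot] at hp
  have hdeg : (p %ₘ (Polynomial.X ^ 2 - Polynomial.C (⟨a ^ 2, ha⟩ : F))).natDegree ≤ 1 := by
    have := Polynomial.natDegree_modByMonic_lt p hmon (by
      intro h
      have := congrArg Polynomial.natDegree h
      rw [Polynomial.natDegree_X_pow_sub_C] at this
      simp at this)
    rw [Polynomial.natDegree_X_pow_sub_C] at this
    omega
  obtain ⟨v, u, huv⟩ := Polynomial.exists_eq_X_add_C_of_natDegree_le_one hdeg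
  rw [huv] at hp
  refine ⟨u, u.2, v, v.2, ?_⟩
  rw [← hp]
  simp [IntermediateField.algebraMap_apply]
  ring

lemma finrank_quad (F : IntermediateField ℚ ℂ) (a : ℂ) (ha : a ^ 2 ∈ F) (hn : a ∉ F) :
    Module.finrank F F⟮a⟯ = 2 := by
  have hroot : Polynomial.aeval a (Polynomial.X ^ 2 - Polynomial.C (⟨a ^ 2, ha⟩ : F)) = 0 := by
    simp [IntermediateField.algebraMap_apply]
  have hmon : (Polynomial.X ^ 2 - Polynomial.C (⟨a ^ 2, ha⟩ : F)).Monic :=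
    Polynomial.monic_X_pow_sub_C _ (by norm_num)
  have hint : IsIntegral F a := ⟨_, hmon, hroot⟩
  have hirr : Irreducible (Polynomial.X ^ 2 - Polynomial.C (⟨a ^ 2, ha⟩ : F)) := by
    rw [Polynomial.irreducible_iff_roots_eq_zero_of_degree_le_three]
    · rw [Multiset.eq_zero_iff_forall_notMem]
      intro q hq
      rw [Polynomial.mem_roots'] at hq
      have := hq.2
      rw [Polynomial.IsRoot, Polynomial.eval_sub, Polynomial.eval_pow, Polynomial.eval_X, Polynomial.eval_C, sub_eq_zero] at this
      have h2 : (q : ℂ) ^ 2 = a ^ 2 := congrArg Subtype.val this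
      rcases sq_eq_sq_iff_eq_or_eq_neg.1 h2 with h | h
      · exact hn (h ▸ q.2)
      · exact hn (by rw [← neg_neg a, ← h]; exact neg_mem q.2)
    · rw [Polynomial.natDegree_X_pow_sub_C]
    · rw [Polynomial.natDegree_X_pow_sub_C]; norm_num
  rw [IntermediateField.adjoin.finrank hint, ← minpoly.eq_of_irreducible_of_monic hirr hroot hmon,
    Polynomial.natDegree_X_pow_sub_C]

lemma kummer {ι : Type*} [DecidableEq ι] (f : ι → ℂ) (S : Finset ι)
    (hf : ∀ i ∈ S, f i ^ 2 ∈ (⊥ : IntermediateField ℚ ℂ))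
    (hind : ∀ T ⊆ S, T.Nonempty → ∏ i ∈ T, f i ∉ (⊥ : IntermediateField ℚ ℂ)) :
    Module.finrank ℚ (adjoin ℚ (f '' S)) = 2 ^ S.card ∧
      ∀ x : ℂ, x ^ 2 ∈ (⊥ : IntermediateField ℚ ℂ) → x ∈ adjoin ℚ (f '' S) →
        ∃ T ⊆ S, x * ∏ i ∈ T, f i ∈ (⊥ : IntermediateField ℚ ℂ) := by
  induction S using Finset.induction_on with
  | empty => 
    refine ⟨by simp, ?_⟩
    intro x _ hx
    exact ⟨∅, by simp, by simpa using hx⟩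
  | insert i S hi ih =>
    obtain ⟨ih1, ih2⟩ := ih (fun j hj => hf j (Finset.mem_insert_of_mem hj))
      (fun T hT => hind T (hT.trans (Finset.subset_insert _ _)))
    set F := adjoin ℚ (f '' (S : Set ι)) with hF
    have ha : f i ^ 2 ∈ (⊥ : IntermediateField ℚ ℂ) := hf i (Finset.mem_insert_self _ _)
    have hbot : ∀ {x : ℂ}, x ∈ (⊥ : IntermediateField ℚ ℂ) → x ∈ F := fun h => (bot_le : ⊥ ≤ F) h
    have hn : f i ∉ F := by
      intro h
      obtain ⟨T, hT, hTT⟩ := ih2 _ ha h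
      apply hind (insert i T) (Finset.insert_subset_insert _ hT) (Finset.insert_nonempty _ _)
      rwa [Finset.prod_insert (fun h => hi (hT h))]
    have hadj : adjoin ℚ (f '' (insert i S : Finset ι)) = (F⟮f i⟯).restrictScalars ℚ := by
      refine Eq.trans ?_ (IntermediateField.adjoin_adjoin_left ℚ (f '' (S : Set ι)) {f i}).symm
      congr 1
      rw [Finset.coe_insert, Set.image_insert_eq, Set.union_singleton]
    rw [hadj]
    constructor
    · have h2 := finrank_quad F (f i) (hbot ha) hn
      have h3 := Module.finrank_mul_finrank ℚ F F⟮f i⟯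
      rw [h2, ih1] at h3
      rw [Finset.card_insert_of_notMem hi, pow_succ]
      exact h3.symm
    · intro x hx hxm
      obtain ⟨u, hu, v, hv, huv⟩ := mem_quad F (f i) (hbot ha) x hxm
      have hai : f i ≠ 0 := fun h => hn (h ▸ F.zero_mem)
      have huv0 : u = 0 ∨ v = 0 := by
        by_contra hcon
        push Not at hcon
        apply hn
        have : f i = (x ^ 2 - u ^ 2 - v ^ 2 * f i ^ 2) / (2 * u * v) := by
          have := hcon.1
          have := hcon.2
          field_simp
          rw [huv]; ring
        rw [this]
        have h2 : (2 : ℂ) ∈ F := by exact_mod_cast _root_.natCast_mem F 2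
        exact div_mem (sub_mem (sub_mem (hbot hx) (pow_mem hu 2)) (mul_mem (pow_mem hv 2) (hbot ha)))
          (mul_mem (mul_mem h2 hu) hv)
      rcases huv0 with rfl | rfl
      · have h1 : x * f i = v * f i ^ 2 := by rw [huv]; ring
        obtain ⟨T, hT, hTT⟩ := ih2 (x * f i) (by rw [mul_pow]; exact mul_mem hx ha)
          (by rw [h1]; exact mul_mem hv (hbot ha))
        refine ⟨insert i T, Finset.insert_subset_insert _ hT, ?_⟩
        rwa [Finset.prod_insert (fun h => hi (hT h)), ← mul_assoc]
      · obtain ⟨T, hT, hTT⟩ := ih2 x hx (by rw [huv]; simpa using hu)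
        exact ⟨T, hT.trans (Finset.subset_insert _ _), hTT⟩

def gg (p : ℕ) : ℤ := if p = 2 then -1 else (-1) ^ ((p - 1) / 2) * p
def rr (p : ℕ) : ℂ := (gg p : ℂ) ^ (1 / 2 : ℂ)

lemma rr_sq (p : ℕ) : rr p ^ 2 = (gg p : ℂ) := by
  rw [rr, ← Complex.cpow_nat_mul]; simp

lemma gg_mod (p : ℕ) (hp : p % 2 = 1) : gg p % 4 = 1 := by
  have h2 : p ≠ 2 := by omega
  rw [gg, if_neg h2]
  rcases Nat.even_or_odd ((p - 1) / 2) with h | h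
  · rw [h.neg_one_pow]; obtain ⟨k, hk⟩ := h; omega
  · rw [h.neg_one_pow]; obtain ⟨k, hk⟩ := h; omega

lemma gg_natAbs (p : ℕ) (hp : p ≠ 2) : (gg p).natAbs = p := by
  rw [gg, if_neg hp, Int.natAbs_mul, Int.natAbs_pow]; simp

lemma prod_gg_mod (T : Finset ℕ) (hT : ∀ p ∈ T, p % 2 = 1) : (∏ p ∈ T, gg p) % 4 = 1 := by
  induction T using Finset.induction_on with
  | empty => simp
  | insert i S hi ih =>
    rw [Finset.prod_insert hi, Int.mul_emod, gg_mod i (hT i (Finset.mem_insert_self _ _)),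
      ih (fun j hj => hT j (Finset.mem_insert_of_mem hj))]
    rfl

lemma indep_gg (T : Finset ℕ) (hT : ∀ p ∈ T, p.Prime) (hne : T.Nonempty) :
    ¬ IsSquare (∏ p ∈ T, gg p) := by
  by_cases h : T = {2}
  · subst h
    rintro ⟨m, hm⟩
    simp [gg] at hm
    nlinarith [mul_self_nonneg m]
  rintro ⟨m, hm⟩
  have h1 : (∏ p ∈ T, gg p).natAbs = ∏ p ∈ T.erase 2, p := by
    rw [← Int.natAbsHom_apply, map_prod]
    simp only [Int.natAbsHom_apply]
    have : ∏ p ∈ T.erase 2, p = ∏ p ∈ T.erase 2, (gg p).natAbs :=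
      Finset.prod_congr rfl (fun p hp => (gg_natAbs p (Finset.ne_of_mem_erase hp)).symm)
    rw [this]
    exact (Finset.prod_erase T (by simp [gg])).symm
  have hsq : Squarefree (∏ p ∈ T.erase 2, p) := by
    apply Finset.squarefree_prod_of_pairwise_isCoprime
    · intro a ha b hb hab
      simp only [Finset.coe_erase, Set.mem_sdiff, Finset.mem_coe] at ha hb
      exact Nat.coprime_iff_isRelPrime.1 ((Nat.coprime_primes (hT a ha.1) (hT b hb.1)).2 hab)
    · intro a ha
      exact (hT a (Finset.mem_of_mem_erase ha)).prime.squarefree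
  rw [hm, Int.natAbs_mul] at h1
  have hu := hsq m.natAbs ⟨1, by rw [mul_one]; exact h1.symm⟩
  rw [Nat.isUnit_iff] at hu
  rw [hu] at h1
  obtain ⟨q, hq, hq2⟩ : ∃ q ∈ T, q ≠ 2 := by
    by_contra hcon
    push Not at hcon
    exact h (Finset.eq_singleton_iff_nonempty_unique_mem.2 ⟨hne, hcon⟩)
  have : q ∣ ∏ p ∈ T.erase 2, p := Finset.dvd_prod_of_mem (fun p => p) (Finset.mem_erase.2 ⟨hq2, hq⟩)
  rw [← h1] at this
  exact (hT q hq).one_lt.ne' (by simpa using this)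

lemma finrank_rr (S : Finset ℕ) (hS : ∀ p ∈ S, p.Prime) :
    Module.finrank ℚ (adjoin ℚ (rr '' S)) = 2 ^ S.card := by
  refine (kummer rr S ?_ ?_).1
  · intro i _
    rw [rr_sq]; exact intCast_mem _ _
  · intro T hT hne hmem
    apply indep_gg T (fun p hp => hS p (hT hp)) hne
    rw [IntermediateField.mem_bot] at hmem
    obtain ⟨q, hq⟩ := hmem
    rw [← Rat.isSquare_intCast_iff]
    refine ⟨q, ?_⟩
    apply (algebraMap ℚ ℂ).injective
    rw [map_mul, hq, ← Finset.prod_mul_distrib, map_intCast]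
    push_cast
    exact Finset.prod_congr rfl (fun p _ => by rw [← rr_sq]; ring)

lemma sqrt_mem (G : IntermediateField ℚ ℂ) (d : ℤ) (hd : Squarefree d) (hodd : Odd d)
    (hG : ∀ p : ℕ, p.Prime → (p : ℤ) ∣ d → rr p ∈ G) (h : d % 4 = 1 ∨ rr 2 ∈ G) (x : ℂ) 
    (hx : x ^ 2 = (d : ℂ)) : x ∈ G := by
  set y := ∏ p ∈ d.natAbs.primeFactors, rr p with hy
  have hyG : y ∈ G := prod_mem (fun p hp => hG p (Nat.prime_of_mem_primeFactors hp)
    (Int.natCast_dvd.2 (Nat.dvd_of_mem_primeFactors hp)))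
  have hoddp : ∀ p ∈ d.natAbs.primeFactors, p % 2 = 1 := by
    intro p hp
    exact Nat.odd_iff.1 ((Int.natAbs_odd.2 hodd).of_dvd_nat (Nat.dvd_of_mem_primeFactors hp))
  have hy2 : y ^ 2 = ((∏ p ∈ d.natAbs.primeFactors, gg p : ℤ) : ℂ) := by
    rw [hy, ← Finset.prod_pow]; push_cast
    exact Finset.prod_congr rfl (fun p _ => rr_sq p)
  have hmod := prod_gg_mod _ hoddp
  have habs : (∏ p ∈ d.natAbs.primeFactors, gg p).natAbs = d.natAbs := by
    rw [← Int.natAbsHom_apply, map_prod]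
    simp only [Int.natAbsHom_apply]
    rw [Finset.prod_congr rfl (fun p hp => gg_natAbs p (by have := hoddp p hp; omega))]
    exact Nat.prod_primeFactors_of_squarefree (Int.squarefree_natAbs.2 hd)
  rcases Int.natAbs_eq_natAbs_iff.1 habs with he | he
  · rw [he, ← hx] at hy2
    rcases sq_eq_sq_iff_eq_or_eq_neg.1 hy2 with h | h
    · exact h ▸ hyG
    · rw [← neg_neg x, ← h]; exact neg_mem hyG
  · rcases h with h | h
    · omega
    · have h2 : rr 2 ^ 2 = -1 := by rw [rr_sq]; simp [gg]
      have : x ^ 2 = (rr 2 * y) ^ 2 := by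
        rw [mul_pow, h2, hy2, he, hx]; push_cast; ring
      rcases sq_eq_sq_iff_eq_or_eq_neg.1 this with h' | h'
      · rw [h']; exact mul_mem h hyG
      · rw [h']; exact neg_mem (mul_mem h hyG)

lemma biquad_discr (d₁ d₂ : ℤ) (hsf₁ : Squarefree d₁) (hsf₂ : Squarefree d₂)
    (hodd₁ : Odd d₁) (hodd₂ : Odd d₂) (h1 : d₁ ≠ 1) (h2 : d₂ ≠ 1)
    (hnsq : ¬ IsSquare (d₁ * d₂)) (K : Type*) [Field K] [NumberField K]
    (hdeg : Module.finrank ℚ K = 4) (α β : K) (hα : α ^ 2 = (d₁ : K)) (hβ : β ^ 2 = (d₂ : K)) :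
    (discr K).natAbs.primeFactors =
      (d₁ * d₂).natAbs.primeFactors ∪ (if d₁ % 4 = 1 ∧ d₂ % 4 = 1 then ∅ else {2}) := by
  have key : ∀ d : ℤ, Squarefree d → d ≠ 1 → ¬ IsSquare d := by
    rintro d hd hd1 ⟨m, rfl⟩
    rcases Int.isUnit_iff.1 (hd m ⟨1, by ring⟩) with rfl | rfl <;> simp at hd1
  have n1 := key d₁ hsf₁ h1
  have n2 := key d₂ hsf₂ h2
  have h0 : d₁ * d₂ ≠ 0 := mul_ne_zero hsf₁.ne_zero hsf₂.ne_zero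
  have hg := discr_dvd_gen K hdeg d₁ d₂ n1 n2 hnsq α β hα hβ
  ext p
  rw [Finset.mem_union, Nat.mem_primeFactors, Nat.mem_primeFactors, ← Int.natCast_dvd, ← Int.natCast_dvd]
  have e0 : (discr K).natAbs ≠ 0 := Int.natAbs_ne_zero.2 (discr_ne_zero K)
  have e1 : (d₁ * d₂).natAbs ≠ 0 := Int.natAbs_ne_zero.2 h0
  constructor
  · rintro ⟨hp, hpd, -⟩
    have hpp := Nat.prime_iff_prime_int.1 hp
    by_cases hd : (p : ℤ) ∣ d₁ * d₂
    · exact Or.inl ⟨hp, hd, e1⟩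
    right
    split_ifs with hc
    · have := hpd.trans (discr_dvd_one K hdeg d₁ d₂ n1 n2 hnsq α β hα hβ hc.1 hc.2)
      rw [← mul_pow] at this
      exact absurd (hpp.dvd_of_dvd_pow this) hd
    · have := hpd.trans hg
      rw [mul_assoc, ← mul_pow] at this
      rcases hpp.dvd_or_dvd this with h | h
      · have h3 : (p : ℤ) ∣ 2 ^ 8 := by norm_num; exact h
        have h4 := hpp.dvd_of_dvd_pow h3
        have h5 : p ∣ 2 := by exact_mod_cast h4
        simpa using (Nat.prime_dvd_prime_iff_eq hp Nat.prime_two).1 h5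
      · exact absurd (hpp.dvd_of_dvd_pow h) hd
  · rintro (⟨hp, hpd, -⟩ | h)
    · refine ⟨hp, ?_, e0⟩
      have hpp := Nat.prime_iff_prime_int.1 hp
      rcases hpp.dvd_or_dvd hpd with h | h
      · exact ram_odd K p hpp d₁ hsf₁ h α hα
      · exact ram_odd K p hpp d₂ hsf₂ h β hβ
    · split_ifs at h with hc
      · simp at h
      · rw [Finset.mem_singleton] at h
        subst h
        refine ⟨Nat.prime_two, ?_, e0⟩
        rw [Int.odd_iff] at hodd₁ hodd₂
        by_cases hc1 : d₁ % 4 = 1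
        · have : d₂ % 4 = 3 := by
            have : d₂ % 4 ≠ 1 := fun h => hc ⟨hc1, h⟩
            omega
          exact_mod_cast ram_two K d₂ this β hβ
        · exact_mod_cast ram_two K d₁ (by omega) α hα

lemma genus_eq (d₁ d₂ : ℤ) (hodd₁ : Odd d₁) (hodd₂ : Odd d₂) (h0 : d₁ * d₂ ≠ 0) :
    genusField d₁ d₂ = adjoin ℚ (rr '' (((d₁ * d₂).natAbs.primeFactors ∪
      (if d₁ % 4 = 1 ∧ d₂ % 4 = 1 then ∅ else {2}) : Finset ℕ) : Set ℕ)) := by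
  set S : Finset ℕ := (d₁ * d₂).natAbs.primeFactors ∪
      (if d₁ % 4 = 1 ∧ d₂ % 4 = 1 then ∅ else {2}) with hS
  have hoddp : ∀ p : ℕ, (p : ℤ) ∣ d₁ * d₂ → p ≠ 2 := by
    rintro p hp rfl
    have h := hodd₁.mul hodd₂
    rw [Int.odd_iff] at h
    push_cast at hp
    omega
  have hgg : ∀ p : ℕ, (p : ℤ) ∣ d₁ * d₂ → ((-1 : ℂ) ^ ((p - 1) / 2) * (p : ℂ)) = (gg p : ℂ) := by
    intro p hp
    rw [gg, if_neg (hoddp p hp)]; push_cast; rfl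
  have hgg2 : (-1 : ℂ) = (gg 2 : ℂ) := by simp [gg]
  have hroot : ∀ p ∈ S, ∀ x : ℂ, x ^ 2 = (gg p : ℂ) → x ∈ adjoin ℚ (rr '' (S : Set ℕ)) := by
    intro p hp x hx
    have hm : rr p ∈ adjoin ℚ (rr '' (S : Set ℕ)) := subset_adjoin _ _ ⟨p, hp, rfl⟩
    rw [← rr_sq] at hx
    rcases sq_eq_sq_iff_eq_or_eq_neg.1 hx with h | h
    · rw [h]; exact hm
    · rw [h]; exact neg_mem hm
  have hgens : genusGens d₁ d₂ ⊆ adjoin ℚ (rr '' (S : Set ℕ)) := by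
    rintro x ⟨p, hp, hpd, hx⟩
    rw [hgg p hpd] at hx
    refine hroot p ?_ x hx
    exact Finset.mem_union_left _ (Nat.mem_primeFactors.2 ⟨hp, Int.natCast_dvd.1 hpd, Int.natAbs_ne_zero.2 h0⟩)
  have hback : ∀ p ∈ (d₁ * d₂).natAbs.primeFactors, rr p ∈ genusGens d₁ d₂ := by
    intro p hp
    have hd : (p : ℤ) ∣ d₁ * d₂ := Int.natCast_dvd.2 (Nat.dvd_of_mem_primeFactors hp)
    exact ⟨p, Nat.prime_of_mem_primeFactors hp, hd, by rw [hgg p hd, rr_sq]⟩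
  unfold genusField
  split_ifs with hc
  · apply le_antisymm
    · exact adjoin_le_iff.2 hgens
    · rw [adjoin_le_iff]
      rintro _ ⟨p, hp, rfl⟩
      rw [hS, if_pos hc, Finset.union_empty] at hp
      exact subset_adjoin _ _ (hback p hp)
  · apply le_antisymm
    · refine adjoin_le_iff.2 (Set.union_subset hgens ?_)
      intro x hx
      exact hroot 2 (by rw [hS, if_neg hc]; simp) x (hgg2 ▸ hx)
    · rw [adjoin_le_iff]
      rintro _ ⟨p, hp, rfl⟩
      rw [hS, if_neg hc, Finset.mem_coe, Finset.mem_union, Finset.mem_singleton] at hp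
      apply subset_adjoin
      rcases hp with hp | rfl
      · exact Or.inl (hback p hp)
      · right
        change rr 2 ^ 2 = -1
        rw [rr_sq, hgg2]

theorem stmt2 (d₁ d₂ : ℤ) (hsf₁ : Squarefree d₁) (hsf₂ : Squarefree d₂)
    (hodd₁ : Odd d₁) (hodd₂ : Odd d₂) (hne : d₁ ≠ d₂) (h1 : d₁ ≠ 1) (h2 : d₂ ≠ 1)
    (hnsq : ¬ IsSquare (d₁ * d₂))
    [NumberField (biquad d₁ d₂)]
    (hdeg : Module.finrank ℚ (biquad d₁ d₂) = 4) :
    ∃ h : biquad d₁ d₂ ≤ genusField d₁ d₂,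
      Module.finrank (biquad d₁ d₂) (IntermediateField.extendScalars h) =
        2 ^ ((NumberField.discr (biquad d₁ d₂)).natAbs.primeFactors.card - 2) := by
  have h0 : d₁ * d₂ ≠ 0 := mul_ne_zero hsf₁.ne_zero hsf₂.ne_zero
  have hG := genus_eq d₁ d₂ hodd₁ hodd₂ h0
  obtain ⟨a, ha⟩ := IsAlgClosed.exists_pow_nat_eq (d₁ : ℂ) (n := 2) (by norm_num)
  obtain ⟨b, hb⟩ := IsAlgClosed.exists_pow_nat_eq (d₂ : ℂ) (n := 2) (by norm_num)
  have hdisc := biquad_discr d₁ d₂ hsf₁ hsf₂ hodd₁ hodd₂ h1 h2 hnsq (biquad d₁ d₂) hdeg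
    ⟨a, subset_adjoin _ _ (Or.inl ha)⟩ ⟨b, subset_adjoin _ _ (Or.inr hb)⟩
    (Subtype.ext (by simpa using ha)) (Subtype.ext (by simpa using hb))
  rw [← hdisc] at hG
  set S := (NumberField.discr (biquad d₁ d₂)).natAbs.primeFactors with hS
  have hmem : ∀ p ∈ S, rr p ∈ genusField d₁ d₂ := by
    intro p hp
    rw [hG]; exact subset_adjoin _ _ ⟨p, hp, rfl⟩
  have hmem' : ∀ p : ℕ, p.Prime → (p : ℤ) ∣ d₁ * d₂ → rr p ∈ genusField d₁ d₂ := by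
    intro p hp hpd
    apply hmem
    rw [hdisc]
    exact Finset.mem_union_left _ (Nat.mem_primeFactors.2 ⟨hp, Int.natCast_dvd.1 hpd, Int.natAbs_ne_zero.2 h0⟩)
  have hmod : (d₁ % 4 = 1 ∧ d₂ % 4 = 1) ∨ rr 2 ∈ genusField d₁ d₂ := by
    by_cases hc : d₁ % 4 = 1 ∧ d₂ % 4 = 1
    · exact Or.inl hc
    · right
      apply hmem
      rw [hdisc, if_neg hc]; simp
  have hle : biquad d₁ d₂ ≤ genusField d₁ d₂ := by
    refine adjoin_le_iff.2 ?_
    rintro x (hx | hx)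
    · exact sqrt_mem _ d₁ hsf₁ hodd₁ (fun p hp hpd => hmem' p hp (hpd.mul_right _))
        (hmod.imp_left And.left) x hx
    · exact sqrt_mem _ d₂ hsf₂ hodd₂ (fun p hp hpd => hmem' p hp (hpd.mul_left _))
        (hmod.imp_left And.right) x hx
  refine ⟨hle, ?_⟩
  have hfin : Module.finrank ℚ (genusField d₁ d₂) = 2 ^ S.card := by
    rw [hG]; exact finrank_rr S (fun p hp => Nat.prime_of_mem_primeFactors hp)
  have htower : Module.finrank ℚ (biquad d₁ d₂) *
      Module.finrank (biquad d₁ d₂) (IntermediateField.extendScalars hle) =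
      Module.finrank ℚ (genusField d₁ d₂) :=
    Module.finrank_mul_finrank ℚ (biquad d₁ d₂) (IntermediateField.extendScalars hle)
  rw [hdeg, hfin] at htower
  generalize Module.finrank (biquad d₁ d₂) (IntermediateField.extendScalars hle) = m at htower ⊢
  generalize S.card = n at htower ⊢
  match n, htower with
  | 0, h => omega
  | 1, h => omega
  | k + 2, h =>
    rw [Nat.add_sub_cancel]
    rw [pow_add] at h
    omega
end
end

section
/- Let K = ℚ(√d₁, √d₂) be a biquadratic field with d₁, d₂ positive odd squarefree integers, and suppose ω(|Δ_K|) ≥ 3, where Δ_K is the discriminant of K. Then there is an injective group homomorphism from (ℤ/2ℤ)^{ω(|Δ_K|) − 3} into the ideal class group Cl_K of K. -/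
open IntermediateField NumberField
noncomputable section
theorem desc_odd (p : ℕ) (hp : p.Prime) (d : ℤ) (hd : (p : ℤ) ∣ d)
    (hd2 : ¬ ((p : ℤ) * p) ∣ d) (c : ℤ) (hc : ¬ (p : ℤ) ∣ c) :
    ∀ n : ℕ, ∀ m a b : ℤ, m.natAbs = n → m ≠ 0 → m ^ 2 * c = a ^ 2 - d * b ^ 2 →
      jacobiSym c p = 1 := by
  have hP : Prime (p : ℤ) := Nat.prime_iff_prime_int.mp hp
  have hp0 : (p : ℤ) ≠ 0 := hP.ne_zero
  intro n
  induction n using Nat.strong_induction_on with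
  | _ n ih =>
    intro m a b hmn hm h
    obtain ⟨e, rfl⟩ := hd
    by_cases hpm : (p : ℤ) ∣ m
    · obtain ⟨m', rfl⟩ := hpm
      have ha : (p : ℤ) ∣ a := by
        apply hP.dvd_of_dvd_pow (n := 2)
        exact ⟨p * m' ^ 2 * c + e * b ^ 2, by linear_combination -h⟩
      obtain ⟨a', rfl⟩ := ha
      have h2 : e * b ^ 2 = p * (a' ^ 2 - m' ^ 2 * c) := by
        apply mul_left_cancel₀ hp0
        linear_combination h
      have hb : (p : ℤ) ∣ b := by
        have : (p : ℤ) ∣ e * b ^ 2 := ⟨_, h2⟩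
        rcases hP.dvd_or_dvd this with h3 | h3
        · exact absurd (mul_dvd_mul_left _ h3) hd2
        · exact hP.dvd_of_dvd_pow h3
      obtain ⟨b', rfl⟩ := hb
      have hm' : m' ≠ 0 := by rintro rfl; simp at hm
      refine ih m'.natAbs ?_ m' a' b' rfl hm' ?_
      · rw [← hmn, Int.natAbs_mul, Int.natAbs_natCast]
        have := hp.two_le
        have : 0 < m'.natAbs := Int.natAbs_pos.mpr hm'
        nlinarith
      · apply mul_left_cancel₀ (mul_ne_zero hp0 hp0)
        linear_combination h
    · have := Fact.mk hp
      rw [← jacobiSym.legendreSym.to_jacobiSym]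
      have hc0 : ((c : ℤ) : ZMod p) ≠ 0 := by
        rwa [Ne, ZMod.intCast_zmod_eq_zero_iff_dvd]
      have hm0 : ((m : ℤ) : ZMod p) ≠ 0 := by
        rwa [Ne, ZMod.intCast_zmod_eq_zero_iff_dvd]
      rw [legendreSym.eq_one_iff _ hc0]
      have h' := congrArg (fun z : ℤ => (z : ZMod p)) h
      simp at h'
      refine ⟨a / m, ?_⟩
      field_simp
      linear_combination h'

theorem desc_two (d : ℤ) (hd : d % 4 = 3) (c : ℤ) (hc : ¬ 2 ∣ c) :
    ∀ n : ℕ, ∀ m a b : ℤ, m.natAbs = n → m ≠ 0 → m ^ 2 * c = a ^ 2 - d * b ^ 2 →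
      ZMod.χ₄ c = 1 := by
  intro n
  induction n using Nat.strong_induction_on with
  | _ n ih =>
    intro m a b hmn hm h
    obtain ⟨e, rfl⟩ : ∃ e, d = 4 * e + 3 := ⟨d / 4, by omega⟩
    rcases Int.even_or_odd' m with ⟨m', rfl | rfl⟩
    · rcases Int.even_or_odd' a with ⟨a', rfl | rfl⟩ <;>
      rcases Int.even_or_odd' b with ⟨b', rfl | rfl⟩
      · have hm' : m' ≠ 0 := by rintro rfl; simp at hm
        refine ih m'.natAbs (by omega) m' a' b' rfl hm' ?_
        linarith
      all_goals
        exfalso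
        ring_nf at h
        omega
    · have h4 : c % 4 = 1 := by
        obtain ⟨c', rfl⟩ : ∃ c', c = 2 * c' + 1 := ⟨c / 2, by omega⟩
        rcases Int.even_or_odd' a with ⟨a', rfl | rfl⟩ <;>
        rcases Int.even_or_odd' b with ⟨b', rfl | rfl⟩ <;>
        rcases Int.even_or_odd' c' with ⟨c'', rfl | rfl⟩ <;>
        ring_nf at h ⊢ <;> omega
      rw [ZMod.χ₄_int_eq_if_mod_four]
      have : c % 2 ≠ 0 := by omega
      simp [h4, this]

structure BQ (K : Type*) [Field K] [NumberField K] (d₁ d₂ : ℤ) (s t : K)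
    (b : Module.Basis (Fin 4) ℚ K) : Prop where
  hs : s ^ 2 = (d₁ : K)
  ht : t ^ 2 = (d₂ : K)
  h0 : b 0 = 1
  h1 : b 1 = s
  h2 : b 2 = t
  h3 : b 3 = s * t

theorem BQ.eq {K : Type*} [Field K] [NumberField K] {d₁ d₂ : ℤ} {s t : K}
    {b : Module.Basis (Fin 4) ℚ K} (h : BQ K d₁ d₂ s t b) (α : K) :
    α = (b.repr α 0 : K) + (b.repr α 1 : K) * s + (b.repr α 2 : K) * t
      + (b.repr α 3 : K) * (s * t) := by
  have := b.sum_repr α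
  simp only [Fin.sum_univ_four, h.h0, h.h1, h.h2, h.h3, Rat.smul_def, mul_one] at this
  exact this.symm

theorem BQ.repr_eq {K : Type*} [Field K] [NumberField K] {d₁ d₂ : ℤ} {s t : K}
    {b : Module.Basis (Fin 4) ℚ K} (h : BQ K d₁ d₂ s t b) (c : Fin 4 → ℚ) (x : K)
    (hx : x = (c 0 : K) + (c 1 : K) * s + (c 2 : K) * t + (c 3 : K) * (s * t)) (i : Fin 4) :
    b.repr x i = c i := by
  have h1 : x = ∑ i, c i • b i := by
    simp only [Fin.sum_univ_four, h.h0, h.h1, h.h2, h.h3, Rat.smul_def, mul_one]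
    exact hx
  rw [h1, b.repr_sum_self]

theorem BQ.matrix {K : Type*} [Field K] [NumberField K] {d₁ d₂ : ℤ} {s t : K}
    {b : Module.Basis (Fin 4) ℚ K} (h : BQ K d₁ d₂ s t b) (α : K) (x y z w : ℚ)
    (hα : α = (x : K) + (y : K) * s + (z : K) * t + (w : K) * (s * t)) :
    Algebra.leftMulMatrix b α =
      !![x, d₁ * y, d₂ * z, d₁ * d₂ * w;
         y, x, d₂ * w, d₂ * z;
         z, d₁ * w, x, d₁ * y;
         w, z, y, x] := by
  have hs := h.hs
  have ht := h.ht
  have c0 := h.repr_eq ![x, y, z, w] (α * b 0) (by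
    rw [h.h0, hα]; simp)
  have c1 := h.repr_eq ![d₁ * y, x, d₁ * w, z] (α * b 1) (by
    rw [h.h1, hα]; simp
    linear_combination ((y : K) + w * t) * hs)
  have c2 := h.repr_eq ![d₂ * z, d₂ * w, x, y] (α * b 2) (by
    rw [h.h2, hα]; simp
    linear_combination ((z : K) + w * s) * ht)
  have c3 := h.repr_eq ![d₁ * d₂ * w, d₂ * z, d₁ * y, x] (α * b 3) (by
    rw [h.h3, hα]; simp
    linear_combination ((y : K) * t + w * t ^ 2) * hs + ((z : K) * s + w * d₁) * ht)
  ext i j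
  rw [Algebra.leftMulMatrix_eq_repr_mul]
  fin_cases j
  · exact (c0 i).trans (by fin_cases i <;> rfl)
  · exact (c1 i).trans (by fin_cases i <;> rfl)
  · exact (c2 i).trans (by fin_cases i <;> rfl)
  · exact (c3 i).trans (by fin_cases i <;> rfl)

theorem BQ.norm {K : Type*} [Field K] [NumberField K] {d₁ d₂ : ℤ} {s t : K}
    {b : Module.Basis (Fin 4) ℚ K} (h : BQ K d₁ d₂ s t b) (α : K) :
    (∃ A B : ℚ, Algebra.norm ℚ α = A ^ 2 - d₁ * B ^ 2) ∧
    (∃ A B : ℚ, Algebra.norm ℚ α = A ^ 2 - d₂ * B ^ 2) := by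
  rw [Algebra.norm_eq_matrix_det b, h.matrix α _ _ _ _ (h.eq α)]
  generalize b.repr α 0 = x
  generalize b.repr α 1 = y
  generalize b.repr α 2 = z
  generalize b.repr α 3 = w
  constructor
  · refine ⟨x ^ 2 + d₁ * y ^ 2 - d₂ * (z ^ 2 + d₁ * w ^ 2), 2 * x * y - d₂ * (2 * z * w), ?_⟩
    simp [Matrix.det_succ_row_zero, Fin.sum_univ_succ, Fin.succAbove]
    ring
  · refine ⟨x ^ 2 + d₂ * z ^ 2 - d₁ * (y ^ 2 + d₂ * w ^ 2), 2 * x * z - d₁ * (2 * y * w), ?_⟩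
    simp [Matrix.det_succ_row_zero, Fin.sum_univ_succ, Fin.succAbove]
    ring

theorem BQ.trace {K : Type*} [Field K] [NumberField K] {d₁ d₂ : ℤ} {s t : K}
    {b : Module.Basis (Fin 4) ℚ K} (h : BQ K d₁ d₂ s t b) (α : K) (x y z w : ℚ)
    (hα : α = (x : K) + (y : K) * s + (z : K) * t + (w : K) * (s * t)) :
    Algebra.trace ℚ K α = 4 * x := by
  rw [Algebra.trace_eq_matrix_trace b, h.matrix α x y z w hα]
  simp [Matrix.trace, Fin.sum_univ_succ]
  ring

theorem BQ.discr_basis {K : Type*} [Field K] [NumberField K] {d₁ d₂ : ℤ} {s t : K}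
    {b : Module.Basis (Fin 4) ℚ K} (h : BQ K d₁ d₂ s t b) :
    Algebra.discr ℚ b = 256 * (d₁ : ℚ) ^ 2 * d₂ ^ 2 := by
  have hs := h.hs
  have ht := h.ht
  have : Algebra.traceMatrix ℚ b = Matrix.diagonal ![(4 : ℚ), 4 * d₁, 4 * d₂, 4 * (d₁ * d₂)] := by
    ext i j
    rw [Algebra.traceMatrix_apply, Algebra.traceForm_apply]
    fin_cases i <;> fin_cases j <;>
      simp only [Fin.zero_eta, Fin.mk_one, Fin.reduceFinMk, h.h0, h.h1, h.h2, h.h3]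
    · rw [h.trace _ 1 0 0 0 (by simp)]; simp
    · rw [h.trace _ 0 1 0 0 (by simp)]; simp
    · rw [h.trace _ 0 0 1 0 (by simp)]; simp
    · rw [h.trace _ 0 0 0 1 (by simp)]; simp
    · rw [h.trace _ 0 1 0 0 (by simp)]; simp
    · rw [h.trace _ d₁ 0 0 0 (by simp; linear_combination hs)]; simp
    · rw [h.trace _ 0 0 0 1 (by simp)]; simp
    · rw [h.trace _ 0 0 d₁ 0 (by simp; linear_combination t * hs)]; simp
    · rw [h.trace _ 0 0 1 0 (by simp)]; simp
    · rw [h.trace _ 0 0 0 1 (by simp; ring)]; simp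
    · rw [h.trace _ d₂ 0 0 0 (by simp; linear_combination ht)]; simp
    · rw [h.trace _ 0 d₂ 0 0 (by simp; linear_combination s * ht)]; simp
    · rw [h.trace _ 0 0 0 1 (by simp)]; simp
    · rw [h.trace _ 0 0 d₁ 0 (by simp; linear_combination t * hs)]; simp
    · rw [h.trace _ 0 d₂ 0 0 (by simp; linear_combination s * ht)]; simp
    · rw [h.trace _ (d₁ * d₂) 0 0 0 (by
        simp; linear_combination t ^ 2 * hs + d₁ * ht)]; simp
  rw [Algebra.discr_def, this, Matrix.det_diagonal]
  simp [Fin.prod_univ_four]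
  ring

theorem discr_dvd_of_integral {K : Type*} [Field K] [NumberField K] (v : Fin 4 → K)
    (hK : Module.finrank ℚ K = 4) (hv : ∀ i, IsIntegral ℤ (v i)) (D : ℤ)
    (hD : Algebra.discr ℚ v = D) : discr K ∣ D := by
  have hc : Fintype.card (Module.Free.ChooseBasisIndex ℤ (𝓞 K)) = Fintype.card (Fin 4) := by
    rw [← Module.finrank_eq_card_chooseBasisIndex, RingOfIntegers.rank, hK, Fintype.card_fin]
  let e := Fintype.equivOfCardEq hc
  let u : Fin 4 → 𝓞 K := fun i => ⟨v i, hv i⟩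
  let B := (RingOfIntegers.basis K).reindex e
  have h1 : discr K = Algebra.discr ℤ B := by
    rw [Module.Basis.coe_reindex, Algebra.discr_reindex]
  have h2 : Algebra.discr ℤ u = (B.toMatrix u).det ^ 2 * Algebra.discr ℤ B := by
    rw [← Algebra.discr_of_matrix_vecMul, B.toMatrix_map_vecMul]
  have h3 : Algebra.discr ℤ u = D := by
    have : ((Algebra.discr ℤ u : ℤ) : ℚ) = D := by
      rw [← hD]
      rw [Algebra.discr_def, Algebra.discr_def]
      rw [← eq_intCast (Int.castRingHom ℚ), RingHom.map_det]
      congr 1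
      ext i j
      simp only [RingHom.mapMatrix_apply, Matrix.map_apply, Algebra.traceMatrix_apply, Algebra.traceForm_apply]
      exact Algebra.coe_trace_int (u i * u j)
    exact_mod_cast this
  rw [← h3, h2, h1]
  exact dvd_mul_left _ _

theorem BQ.discr_odd {K : Type*} [Field K] [NumberField K] {d₁ d₂ : ℤ} {s t : K}
    {b : Module.Basis (Fin 4) ℚ K} (h : BQ K d₁ d₂ s t b) :
    discr K ∣ 256 * d₁ ^ 2 * d₂ ^ 2 := by
  have hs : IsIntegral ℤ s := IsIntegral.of_pow (n := 2) two_pos (by rw [h.hs]; exact isIntegral_algebraMap (R := ℤ) (x := d₁))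
  have ht : IsIntegral ℤ t := IsIntegral.of_pow (n := 2) two_pos (by rw [h.ht]; exact isIntegral_algebraMap (R := ℤ) (x := d₂))
  apply discr_dvd_of_integral b
  · rw [Module.finrank_eq_card_basis b]; rfl
  · intro i
    fin_cases i <;> simp only [Fin.zero_eta, Fin.mk_one, Fin.reduceFinMk, h.h0, h.h1, h.h2, h.h3]
    exacts [isIntegral_one, hs, ht, hs.mul ht]
  · rw [h.discr_basis]; push_cast; rfl

theorem integral_half {K : Type*} [Field K] [NumberField K] (d : ℤ) (s : K) (hs : s ^ 2 = d)
    (hd : d % 4 = 1) : IsIntegral ℤ ((1 + s) / 2) := by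
  obtain ⟨e, rfl⟩ : ∃ e, d = 4 * e + 1 := ⟨d / 4, by omega⟩
  refine ⟨Polynomial.X ^ 2 - Polynomial.X - Polynomial.C e, ?_, ?_⟩
  · monicity!
  · simp only [Polynomial.eval₂_sub, Polynomial.eval₂_pow, Polynomial.eval₂_X, Polynomial.eval₂_C]
    simp only [algebraMap_int_eq, eq_intCast]
    push_cast at hs
    linear_combination hs / 4

theorem BQ.discr_even {K : Type*} [Field K] [NumberField K] {d₁ d₂ : ℤ} {s t : K}
    {b : Module.Basis (Fin 4) ℚ K} (h : BQ K d₁ d₂ s t b) (hd₁ : d₁ % 4 = 1) (hd₂ : d₂ % 4 = 1) :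
    discr K ∣ d₁ ^ 2 * d₂ ^ 2 := by
  have hs := integral_half d₁ s h.hs hd₁
  have ht := integral_half d₂ t h.ht hd₂
  let P : Matrix (Fin 4) (Fin 4) ℚ :=
    !![1, 0, 0, 0; 1/2, 1/2, 0, 0; 1/2, 0, 1/2, 0; 1/4, 1/4, 1/4, 1/4]
  have hv : (P.map (algebraMap ℚ K)).mulVec b =
      ![1, (1 + s) / 2, (1 + t) / 2, ((1 + s) / 2) * ((1 + t) / 2)] := by
    ext i
    fin_cases i <;>
      simp [Matrix.mulVec, dotProduct, Fin.sum_univ_four, P, h.h0, h.h1, h.h2, h.h3] <;> ring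
  have hdet : P.det = 1 / 16 := by
    simp [P, Matrix.det_succ_row_zero, Fin.sum_univ_succ, Fin.succAbove]
    norm_num
  have hd := Algebra.discr_of_matrix_mulVec b P
  rw [hv, hdet, h.discr_basis] at hd
  apply discr_dvd_of_integral _ _ _ _ (hd.trans _)
  · rw [Module.finrank_eq_card_basis b]; rfl
  · intro i
    fin_cases i 
    exacts [isIntegral_one, hs, ht, hs.mul ht]
  · push_cast; ring

theorem BQ.exists_ideal {K : Type*} [Field K] [NumberField K] {d₁ d₂ : ℤ} {s t : K}
    {b : Module.Basis (Fin 4) ℚ K} (h : BQ K d₁ d₂ s t b) (l : ℕ) (hl : l.Prime) (hl2 : l ≠ 2)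
    (hl₁ : ¬ (l : ℤ) ∣ d₁) (hl₂ : ¬ (l : ℤ) ∣ d₂)
    (hq₁ : IsSquare (d₁ : ZMod l)) (hq₂ : IsSquare (d₂ : ZMod l)) :
    ∃ L : Ideal (𝓞 K), Ideal.absNorm L = l := by
  have hs : IsIntegral ℤ s := IsIntegral.of_pow (n := 2) two_pos (by rw [h.hs]; exact isIntegral_algebraMap (R := ℤ) (x := d₁))
  have ht : IsIntegral ℤ t := IsIntegral.of_pow (n := 2) two_pos (by rw [h.ht]; exact isIntegral_algebraMap (R := ℤ) (x := d₂))
  have := Fact.mk hl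
  have hlI : Prime (l : ℤ) := Nat.prime_iff_prime_int.mp hl
  let S : 𝓞 K := ⟨s, hs⟩
  let T : 𝓞 K := ⟨t, ht⟩
  have hS : S ^ 2 = (d₁ : 𝓞 K) := by
    apply RingOfIntegers.ext; push_cast; exact h.hs
  have hT : T ^ 2 = (d₂ : 𝓞 K) := by
    apply RingOfIntegers.ext; push_cast; exact h.ht
  have key : ∀ x : 𝓞 K, ∃ p q r u : ℤ,
      ((4 * d₁ * d₂ : ℤ) : 𝓞 K) * x = p + q * S + r * T + u * (S * T) := by
    intro x
    refine ⟨d₁ * d₂ * Algebra.trace ℤ (𝓞 K) x, d₂ * Algebra.trace ℤ (𝓞 K) (x * S),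
      d₁ * Algebra.trace ℤ (𝓞 K) (x * T), Algebra.trace ℤ (𝓞 K) (x * (S * T)), ?_⟩
    have hx := h.eq (x : K)
    have t0 := (Algebra.coe_trace_int x).trans (h.trace _ _ _ _ _ hx)
    have hss := h.hs
    have htt := h.ht
    have t1 := (Algebra.coe_trace_int (x * S)).trans
      (h.trace _ (d₁ * b.repr x 1) (b.repr x 0) (d₁ * b.repr x 3) (b.repr x 2) (by
        change (x : K) * s = _
        push_cast
        linear_combination s * hx + ((b.repr x 1 : K) + (b.repr x 3 : K) * t) * hss))
    have t2 := (Algebra.coe_trace_int (x * T)).trans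
      (h.trace _ (d₂ * b.repr x 2) (d₂ * b.repr x 3) (b.repr x 0) (b.repr x 1) (by
        change (x : K) * t = _
        push_cast
        linear_combination t * hx + ((b.repr x 2 : K) + (b.repr x 3 : K) * s) * htt))
    have t3 := (Algebra.coe_trace_int (x * (S * T))).trans
      (h.trace _ (d₁ * d₂ * b.repr x 3) (d₂ * b.repr x 2) (d₁ * b.repr x 1) (b.repr x 0) (by
        change (x : K) * (s * t) = _
        push_cast
        linear_combination s * t * hx + ((b.repr x 1 : K) * t + (b.repr x 3 : K) * t ^ 2) * hss
          + ((b.repr x 2 : K) * s + (b.repr x 3 : K) * d₁) * htt))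
    have c0 := congrArg (fun q : ℚ => (q : K)) t0
    have c1 := congrArg (fun q : ℚ => (q : K)) t1
    have c2 := congrArg (fun q : ℚ => (q : K)) t2
    have c3 := congrArg (fun q : ℚ => (q : K)) t3
    push_cast at c0 c1 c2 c3
    apply RingOfIntegers.ext
    change algebraMap (𝓞 K) K _ = algebraMap (𝓞 K) K _
    simp only [map_mul, map_add, map_intCast]
    change _ * (x : K) = _ + _ * s + _ * t + _ * (s * t)
    push_cast
    rw [c0, c1, c2, c3]
    linear_combination 4 * d₁ * d₂ * hx
  obtain ⟨L, hL, hLo⟩ := Ideal.exists_ideal_over_maximal_of_isIntegral (S := 𝓞 K)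
    (Ideal.span {(l : ℤ)})
    (P_max := PrincipalIdealRing.isMaximal_of_irreducible hlI.irreducible)
    (by rw [(RingHom.injective_iff_ker_eq_bot _).mp (algebraMap ℤ (𝓞 K)).injective_int]; exact bot_le)
  refine ⟨L, ?_⟩
  have hlL : ∀ z : ℤ, (z : 𝓞 K) ∈ L ↔ (l : ℤ) ∣ z := by
    intro z
    rw [← Ideal.mem_span_singleton, ← hLo, Ideal.mem_comap]
    simp
  let _ : Field (𝓞 K ⧸ L) := Ideal.Quotient.field L
  have : CharP (𝓞 K ⧸ L) l := by
    constructor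
    intro z
    have := hlL z
    rw [← Ideal.Quotient.eq_zero_iff_mem] at this
    simp at this
    rw [this]
    norm_cast
  let f : ZMod l →+* 𝓞 K ⧸ L := ZMod.castHom dvd_rfl _
  have hf : Function.Surjective f := by
    have hroot : ∀ (d : ℤ) (X : 𝓞 K), X ^ 2 = (d : 𝓞 K) → IsSquare (d : ZMod l) →
        Ideal.Quotient.mk L X ∈ f.range := by
      intro d X hX ⟨a, ha⟩
      have e1 : (Ideal.Quotient.mk L X) ^ 2 = (f a) ^ 2 := by
        rw [← map_pow, hX, ← map_pow, sq, ← ha]; simp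
      rcases sq_eq_sq_iff_eq_or_eq_neg.mp e1 with e | e
      · exact ⟨a, e.symm⟩
      · exact ⟨-a, by rw [map_neg]; exact e.symm⟩
    intro y
    obtain ⟨x, rfl⟩ := Ideal.Quotient.mk_surjective y
    obtain ⟨p, q, r, u, hx⟩ := key x
    have hx' := congrArg (Ideal.Quotient.mk L) hx
    simp only [map_mul, map_add, map_intCast] at hx'
    have hS' := hroot _ _ hS hq₁
    have hT' := hroot _ _ hT hq₂
    have hN : ((4 * d₁ * d₂ : ℤ) : 𝓞 K ⧸ L) ≠ 0 := by
      rw [Ne, CharP.intCast_eq_zero_iff _ l]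
      intro hh
      rcases hlI.dvd_or_dvd hh with hh | hh
      · rcases hlI.dvd_or_dvd hh with hh | hh
        · have : l ∣ 2 ^ 2 := by exact_mod_cast hh
          exact hl2 ((Nat.prime_dvd_prime_iff_eq hl Nat.prime_two).mp (hl.dvd_of_dvd_pow this))
        · exact hl₁ hh
      · exact hl₂ hh
    have hrange : ((4 * d₁ * d₂ : ℤ) : 𝓞 K ⧸ L) * Ideal.Quotient.mk L x ∈ f.range := by
      rw [hx']
      refine add_mem (add_mem (add_mem ?_ ?_) ?_) ?_
      · exact intCast_mem _ _
      · exact mul_mem (intCast_mem _ _) hS'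
      · exact mul_mem (intCast_mem _ _) hT'
      · exact mul_mem (intCast_mem _ _) (mul_mem hS' hT')
    obtain ⟨c, hc⟩ := hrange
    refine ⟨c / ((4 * d₁ * d₂ : ℤ) : ZMod l), ?_⟩
    rw [map_div₀, hc, map_intCast]
    field_simp
  have hbij : Function.Bijective f := ⟨f.injective, hf⟩
  rw [Ideal.absNorm_apply, Submodule.cardQuot_apply, ← Nat.card_eq_of_bijective f hbij,
    Nat.card_zmod]

def chi (p : ℕ) (n : ℤ) : ℤ := if p = 2 then ZMod.χ₄ n else jacobiSym n p

theorem chi_mul (p : ℕ) (a b : ℤ) : chi p (a * b) = chi p a * chi p b := by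
  unfold chi
  split_ifs
  · push_cast; rw [map_mul]
  · exact jacobiSym.mul_left a b p

def Qs (n : ℕ) : Finset ℕ := n.primeFactors ∪ (if n % 4 = 3 then {2} else ∅)

theorem Qs_prime {n p : ℕ} (h : p ∈ Qs n) : p.Prime := by
  unfold Qs at h
  split_ifs at h <;> simp at h
  · rcases h with rfl | h
    · exact Nat.prime_two
    · exact h.1
  · exact h.1

theorem jacobi_prod (a : ℤ) (S : Finset ℕ) (hS : ∀ p ∈ S, p ≠ 0) :
    jacobiSym a (∏ p ∈ S, p) = ∏ p ∈ S, jacobiSym a p := by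
  induction S using Finset.induction_on with
  | empty => simp
  | insert q S hq ih =>
    have h1 : NeZero q := ⟨hS q (by simp)⟩
    have h2 : NeZero (∏ p ∈ S, p) :=
      ⟨Finset.prod_ne_zero_iff.mpr fun p hp => hS p (by simp [hp])⟩
    rw [Finset.prod_insert hq, Finset.prod_insert hq, jacobiSym.mul_right,
      ih fun p hp => hS p (by simp [hp])]

theorem recip (n l : ℕ) (hn : Odd n) (hsf : Squarefree n) (hl : Odd l) :
    jacobiSym n l = ∏ q ∈ Qs n, chi q l := by
  have h2 : 2 ∉ n.primeFactors := by
    intro h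
    have := Nat.dvd_of_mem_primeFactors h
    rcases hn with ⟨k, rfl⟩
    omega
  have h3 : ∏ q ∈ n.primeFactors, chi q l = jacobiSym l n := by
    conv_rhs => rw [← Nat.prod_primeFactors_of_squarefree hsf]
    rw [jacobi_prod _ _ fun p hp => (Nat.prime_of_mem_primeFactors hp).ne_zero]
    apply Finset.prod_congr rfl
    intro q hq
    unfold chi
    rw [if_neg]
    rintro rfl
    exact h2 hq
  have hn2 : n % 2 = 1 := Nat.odd_iff.mp hn
  have hl2 : l % 2 = 1 := Nat.odd_iff.mp hl
  unfold Qs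
  split_ifs with h4
  · rw [Finset.prod_union (by simpa using h2), h3, Finset.prod_singleton]
    have : chi 2 l = if l % 4 = 1 then 1 else -1 := by
      unfold chi
      rw [if_pos rfl, ZMod.χ₄_int_eq_if_mod_four, if_neg (by omega)]
      have : ((l : ℤ) % 4 = 1) ↔ l % 4 = 1 := by omega
      simp only [this]
    rw [this]
    split_ifs with h5
    · rw [mul_one, jacobiSym.quadratic_reciprocity_one_mod_four h5 hn]
    · rw [jacobiSym.quadratic_reciprocity_three_mod_four h4 (by omega)]
      ring
  · rw [Finset.union_empty, h3]
    exact jacobiSym.quadratic_reciprocity_one_mod_four (by omega) hl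

theorem chi_norm (n p : ℕ) (hn : Odd n) (hsf : Squarefree n) (hp : p ∈ Qs n) (c m : ℤ)
    (hc : ¬ (p : ℤ) ∣ c) (hm : m ≠ 0) (A B : ℚ) (h : ((m ^ 2 * c : ℤ) : ℚ) = A ^ 2 - n * B ^ 2) :
    chi p c = 1 := by
  have hpp := Qs_prime hp
  have hint : (m * (A.den * B.den)) ^ 2 * c = (A.num * B.den) ^ 2 - n * (B.num * A.den) ^ 2 := by
    have hA : (A.den : ℚ) ≠ 0 := by exact_mod_cast A.den_ne_zero
    have hB : (B.den : ℚ) ≠ 0 := by exact_mod_cast B.den_ne_zero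
    have hA' : A * A.den = A.num := Rat.mul_den_eq_num A
    have hB' : B * B.den = B.num := Rat.mul_den_eq_num B
    have : (((m * (A.den * B.den)) ^ 2 * c : ℤ) : ℚ) = 
      (((A.num * B.den) ^ 2 - n * (B.num * A.den) ^ 2 : ℤ) : ℚ) := by
      push_cast at h ⊢
      rw [← hA', ← hB']
      linear_combination (A.den * B.den : ℚ) ^ 2 * h
    exact_mod_cast this
  have hm' : m * (A.den * B.den) ≠ 0 := by
    have := A.den_ne_zero
    have := B.den_ne_zero
    positivity
  unfold chi
  split_ifs with h2
  · subst h2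
    have h3 : n % 4 = 3 := by
      by_contra h3
      unfold Qs at hp
      rw [if_neg h3] at hp
      simp at hp
      rcases hn with ⟨k, rfl⟩
      omega
    exact desc_two n (by omega) c (by exact_mod_cast hc) _ _ _ _ rfl hm' hint
  · have h3 : p ∣ n := by
      unfold Qs at hp
      rw [Finset.mem_union] at hp
      rcases hp with hp | hp
      · exact Nat.dvd_of_mem_primeFactors hp
      · split_ifs at hp
        · simp at hp; exact absurd hp h2
        · simp at hp
    refine desc_odd p hpp n (by exact_mod_cast h3) ?_ c hc _ _ _ _ rfl hm' hint
    intro h4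
    have h5 : p * p ∣ n := by exact_mod_cast h4
    exact hpp.not_isUnit (hsf p h5)

def modu (p : ℕ) : ℕ := if p = 2 then 4 else p

theorem chi_congr (p : ℕ) (a b : ℕ) (h : a ≡ b [MOD modu p]) : chi p a = chi p b := by
  unfold chi modu at *
  split_ifs at * with h2
  · have : ((a : ℕ) : ZMod 4) = (b : ZMod 4) := (ZMod.natCast_eq_natCast_iff _ _ _).mpr h
    push_cast
    rw [this]
  · apply jacobiSym.mod_left'
    exact_mod_cast h

theorem chi_unit (p : ℕ) (hp : p.Prime) (a : ℤ) (h : ¬ (p : ℤ) ∣ a) : chi p a = 1 ∨ chi p a = -1 := by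
  unfold chi
  split_ifs with h2
  · subst h2
    rw [ZMod.χ₄_int_eq_if_mod_four, if_neg (by push_cast at h; omega)]
    split_ifs <;> simp
  · apply jacobiSym.eq_one_or_neg_one
    rw [← Int.isCoprime_iff_gcd_eq_one]
    exact ((Nat.prime_iff_prime_int.mp hp).coprime_iff_not_dvd.mpr h).symm

theorem chi_surj (p : ℕ) (hp : p.Prime) (e : ℤˣ) : ∃ a : ℕ, a.Coprime (modu p) ∧ chi p a = e := by
  rcases Int.units_eq_one_or e with rfl | rfl
  · refine ⟨1, by simp, ?_⟩
    unfold chi; split_ifs <;> simp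
  · by_cases h2 : p = 2
    · subst h2
      refine ⟨3, by decide, ?_⟩
      unfold chi; decide
    · have := Fact.mk hp
      obtain ⟨x, hx⟩ := FiniteField.exists_nonsquare (F := ZMod p) (by rwa [ZMod.ringChar_zmod_n])
      have hJ : chi p (x.val : ℕ) = -1 := by
        unfold chi
        rw [if_neg h2, ← jacobiSym.legendreSym.to_jacobiSym, legendreSym.eq_neg_one_iff]
        simpa using hx
      refine ⟨x.val, ?_, by simpa using hJ⟩
      unfold modu
      rw [if_neg h2, Nat.coprime_comm, hp.coprime_iff_not_dvd, ← ZMod.natCast_eq_zero_iff]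
      rw [ZMod.natCast_zmod_val]
      rintro rfl
      exact hx ⟨0, by simp⟩

theorem exists_prime_chi (P : Finset ℕ) (hP : ∀ p ∈ P, p.Prime) (v : ℕ → ℤˣ) (N : ℕ) :
    ∃ l > N, l.Prime ∧ ∀ p ∈ P, chi p l = v p := by
  choose! a ha1 ha2 using fun p (hp : p.Prime) => chi_surj p hp (v p)
  have hm0 : ∀ p ∈ P, modu p ≠ 0 := by
    intro p hp
    unfold modu
    split_ifs
    · simp
    · exact (hP p hp).ne_zero
  have hco : (P : Set ℕ).Pairwise (Function.onFun Nat.Coprime modu) := by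
    intro p hp q hq hpq
    have h := (Nat.coprime_primes (hP p hp) (hP q hq)).mpr hpq
    unfold Function.onFun modu
    split_ifs with h1 h2 h2
    · omega
    · subst h1; exact Nat.Coprime.pow_left 2 h
    · subst h2; exact Nat.Coprime.pow_right 2 h
    · exact h
  obtain ⟨k, hk⟩ := Nat.chineseRemainderOfFinset a modu P hm0 hco
  have hkc : k.Coprime (∏ p ∈ P, modu p) := by
    apply Nat.Coprime.prod_right
    intro p hp
    have := ha1 p (hP p hp)
    unfold Nat.Coprime at this ⊢
    rw [(hk p hp).gcd_eq, this]
  obtain ⟨l, hl, hlp, hlk⟩ := Nat.forall_exists_prime_gt_and_modEq N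
    (Finset.prod_ne_zero_iff.mpr hm0) hkc
  refine ⟨l, hl, hlp, fun p hp => ?_⟩
  rw [← ha2 p (hP p hp)]
  exact chi_congr p l (a p) ((hlk.of_dvd (Finset.dvd_prod_of_mem modu hp)).trans (hk p hp))

theorem embed_of_card (C : Type*) [CommGroup C] [Finite C] (r : ℕ)
    (h : 2 ^ r ≤ Nat.card (C ⧸ (powMonoidHom 2 : C →* C).range)) :
    ∃ f : Multiplicative (Fin r → ZMod 2) →* C, Function.Injective f := by
  have hker : 2 ^ r ≤ Nat.card (powMonoidHom 2 : C →* C).ker := by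
    have h1 := Subgroup.card_mul_index (powMonoidHom 2 : C →* C).ker
    have h2 := Subgroup.card_mul_index (powMonoidHom 2 : C →* C).range
    rw [Subgroup.index_ker] at h1
    have h3 : 0 < Nat.card (powMonoidHom 2 : C →* C).range := Nat.card_pos
    rw [← Subgroup.index] at h
    have : Nat.card (powMonoidHom 2 : C →* C).ker = (powMonoidHom 2 : C →* C).range.index := by
      apply Nat.eq_of_mul_eq_mul_left h3
      rw [h2, mul_comm, h1]
    rwa [this]
  let A := Additive (powMonoidHom 2 : C →* C).ker
  let _ : Module (ZMod 2) A := AddCommGroup.zmodModule (by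
    intro x
    apply Additive.toMul.injective
    apply Subtype.ext
    exact x.toMul.2)
  have : Finite A := inferInstanceAs (Finite (powMonoidHom 2 : C →* C).ker)
  have hcard : Nat.card A = 2 ^ Module.finrank (ZMod 2) A := by
    rw [Module.natCard_eq_pow_finrank (K := ZMod 2), Nat.card_zmod]
  have hr : r ≤ Module.finrank (ZMod 2) A := by
    have h' : 2 ^ r ≤ Nat.card A := hker
    rw [hcard] at h'
    exact (Nat.pow_le_pow_iff_right (by norm_num)).mp h'
  have hr' : Module.finrank (ZMod 2) (Fin r → ZMod 2) ≤ Module.finrank (ZMod 2) A := by simpa using hr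
  obtain ⟨g, hg⟩ := finrank_le_iff_exists_linearMap.mp hr'
  refine ⟨(powMonoidHom 2 : C →* C).ker.subtype.comp (AddMonoidHom.toMultiplicativeLeft g.toAddMonoidHom), ?_⟩
  intro x y hxy
  have h1 := Subtype.ext hxy
  exact hg h1

theorem card_bound (P : Finset ℕ) (Q₁ Q₂ : Finset ℕ) (X : Type*) [Finite X]
    (R : (P → ℤˣ) → X → Prop) (e : P → ℤˣ)
    (h1 : ∀ v : P → ℤˣ, (∏ p : P, if p.1 ∈ Q₁ then v p else 1) = 1 →
      (∏ p : P, if p.1 ∈ Q₂ then v p else 1) = 1 → ∃ x, R v x)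
    (h2 : ∀ v w x, R v x → R w x → v = w ∨ v = w * e) :
    2 ^ (P.card - 3) ≤ Nat.card X ∨ P.card < 3 := by
  classical
  let ψ : Finset ℕ → (P → ℤˣ) →* ℤˣ := fun Q =>
    { toFun := fun v => ∏ p : P, if p.1 ∈ Q then v p else 1
      map_one' := by simp
      map_mul' := by
        intro v w
        rw [← Finset.prod_mul_distrib]
        apply Finset.prod_congr rfl
        intro p _
        split_ifs <;> simp }
  let Ψ := (ψ Q₁).prod (ψ Q₂)
  have hW : 2 ^ P.card ≤ Nat.card Ψ.ker * 4 := by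
    have h3 := Subgroup.card_mul_index Ψ.ker
    rw [Subgroup.index_ker] at h3
    have h4 : Nat.card (P → ℤˣ) = 2 ^ P.card := by simp
    have h5 : Nat.card Ψ.range ≤ 4 := by
      refine (Nat.card_le_card_of_injective _ Subtype.val_injective).trans ?_
      simp
    rw [← h4, ← h3]
    exact Nat.mul_le_mul_left _ h5
  have hex : ∀ v : Ψ.ker, ∃ x, R v.1 x := by
    rintro ⟨v, hv⟩
    rw [MonoidHom.mem_ker] at hv
    exact h1 v (congrArg Prod.fst hv) (congrArg Prod.snd hv)
  choose F hF using hex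
  have := Fintype.ofFinite X
  have := Fintype.ofFinite Ψ.ker
  have hle : Nat.card Ψ.ker ≤ 2 * Nat.card X := by
    rw [Nat.card_eq_fintype_card, Nat.card_eq_fintype_card]
    apply Finset.card_le_mul_card_image_of_maps_to (f := F) (fun _ _ => Finset.mem_univ _)
    intro x _
    by_cases hx : ∃ w, F w = x
    · obtain ⟨w, rfl⟩ := hx
      have : ((Finset.univ.filter fun v => F v = F w).map ⟨Subtype.val, Subtype.val_injective⟩)
          ⊆ {w.1, w.1 * e} := by
        intro u hu
        simp only [Finset.mem_map, Finset.mem_filter, Finset.mem_univ, true_and] at hu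
        obtain ⟨v, hv, rfl⟩ := hu
        have := h2 v.1 w.1 (F w) (hv ▸ hF v) (hF w)
        simpa using this
      have := Finset.card_le_card this
      rw [Finset.card_map] at this
      exact this.trans Finset.card_le_two
    · push Not at hx
      rw [Finset.filter_false_of_mem (by simpa using hx)]
      simp
  by_cases hP : P.card < 3
  · exact Or.inr hP
  · left
    obtain ⟨k, hk⟩ := Nat.exists_eq_add_of_le (Nat.le_of_not_lt hP)
    rw [hk] at hW ⊢
    rw [pow_add] at hW
    simp only [Nat.add_sub_cancel_left]
    omega

theorem principal_of_mk0 {R : Type*} [CommRing R] [IsDedekindDomain R]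
    (I : nonZeroDivisors (Ideal R)) (h : ClassGroup.mk0 I = 1) :
    Submodule.IsPrincipal (I : Ideal R) := by
  obtain ⟨I, hI⟩ := I
  exact (ClassGroup.mk0_eq_one_iff hI).mp h

set_option maxHeartbeats 1000000 in
theorem BQ.main {K : Type*} [Field K] [NumberField K] {n₁ n₂ : ℕ} {s t : K}
    {b : Module.Basis (Fin 4) ℚ K} (h : BQ K n₁ n₂ s t b) (ho₁ : Odd n₁) (ho₂ : Odd n₂)
    (hsf₁ : Squarefree n₁) (hsf₂ : Squarefree n₂)
    (h3 : 3 ≤ (discr K).natAbs.primeFactors.card) :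
    ∃ f : Multiplicative (Fin ((discr K).natAbs.primeFactors.card - 3) → ZMod 2) →*
        ClassGroup (𝓞 K), Function.Injective f := by
  classical
  set P := Qs n₁ ∪ Qs n₂ with hPdef
  have hPprime : ∀ p ∈ P, p.Prime := by
    intro p hp
    rcases Finset.mem_union.mp hp with hp | hp <;> exact Qs_prime hp
  have hn₁ : n₁ ≠ 0 := hsf₁.ne_zero
  have hn₂ : n₂ ≠ 0 := hsf₂.ne_zero
  have hsub : (discr K).natAbs.primeFactors ⊆ P := by
    intro p hp
    have hpp := Nat.prime_of_mem_primeFactors hp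
    have hpI : Prime (p : ℤ) := Nat.prime_iff_prime_int.mp hpp
    have hpd : (p : ℤ) ∣ discr K := Int.natCast_dvd.mpr (Nat.dvd_of_mem_primeFactors hp)
    have hfin : (p : ℤ) ∣ n₁ ^ 2 * n₂ ^ 2 → p ∈ P := by
      intro hd
      have hd : p ∣ n₁ ^ 2 * n₂ ^ 2 := by exact_mod_cast hd
      rcases hpp.dvd_mul.mp hd with hd | hd
      · have := hpp.dvd_of_dvd_pow hd
        simp [P, Qs, hpp, this, hn₁]
      · have := hpp.dvd_of_dvd_pow hd
        simp [P, Qs, hpp, this, hn₂]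
    have ho₁' := Nat.odd_iff.mp ho₁
    have ho₂' := Nat.odd_iff.mp ho₂
    by_cases h2 : p = 2
    · subst h2
      by_cases h41 : n₁ % 4 = 3
      · simp [P, Qs, h41]
      · by_cases h42 : n₂ % 4 = 3
        · simp [P, Qs, h42]
        · exact hfin (hpd.trans (h.discr_even (by omega) (by omega)))
    · apply hfin
      have := hpd.trans h.discr_odd
      rw [mul_assoc] at this
      rcases hpI.dvd_or_dvd this with h5 | h5
      · exfalso
        have h6 : p ∣ 2 ^ 8 := by exact_mod_cast h5
        exact h2 ((Nat.prime_dvd_prime_iff_eq hpp Nat.prime_two).mp (hpp.dvd_of_dvd_pow h6))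
      · exact h5
  have hcardP := Finset.card_le_card hsub
  have hdisc : 2 ^ ((discr K).natAbs.primeFactors.card - 3) ≤ 2 ^ (P.card - 3) :=
    Nat.pow_le_pow_right (by norm_num) (by omega)
  have hneg : ∀ p : P, ∃ u : ℤˣ, chi p.1 (-1) = u := by
    rintro ⟨p, hp⟩
    have hpp := hPprime p hp
    rcases chi_unit p hpp (-1) (by
      intro hd
      rw [dvd_neg] at hd
      exact (Nat.prime_iff_prime_int.mp hpp).not_isUnit (isUnit_of_dvd_one hd)) with h | h
    · exact ⟨1, by simpa using h⟩
    · exact ⟨-1, by simpa using h⟩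
  choose e he using hneg
  apply embed_of_card
  refine hdisc.trans ?_
  let R : (P → ℤˣ) → (ClassGroup (𝓞 K) ⧸ (powMonoidHom 2 : ClassGroup (𝓞 K) →* _).range) → Prop :=
    fun v x => ∃ (l : ℕ) (L : nonZeroDivisors (Ideal (𝓞 K))), l.Prime ∧ l ∉ P ∧
      Ideal.absNorm (L : Ideal (𝓞 K)) = l ∧ (∀ p : P, chi p.1 l = v p) ∧
      x = QuotientGroup.mk (ClassGroup.mk0 L)
  refine (card_bound P (Qs n₁) (Qs n₂) _ R e ?_ ?_).resolve_right (by omega)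
  · intro v hv₁ hv₂
    let v' : ℕ → ℤˣ := fun p => if hp : p ∈ P then v ⟨p, hp⟩ else 1
    obtain ⟨l, hl, hlp, hlv⟩ := exists_prime_chi P hPprime v' (n₁ + n₂ + 2 + ∑ p ∈ P, p)
    have := Fact.mk hlp
    have hlo : Odd l := hlp.odd_of_ne_two (by omega)
    have hsq : ∀ n : ℕ, n ≠ 0 → n < l → Odd n → Squarefree n → Qs n ⊆ P →
        (∏ p : P, if p.1 ∈ Qs n then v p else 1) = 1 →
        ¬ (l : ℤ) ∣ n ∧ IsSquare ((n : ℤ) : ZMod l) := by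
      intro n hn0 hnl hno hnsf hQ hv
      have hnd : ¬ (l : ℤ) ∣ n := by
        intro hd
        have := Nat.le_of_dvd (Nat.pos_of_ne_zero hn0) (by exact_mod_cast hd)
        omega
      refine ⟨hnd, ?_⟩
      rw [← legendreSym.eq_one_iff l (by rwa [Ne, ZMod.intCast_zmod_eq_zero_iff_dvd]),
        jacobiSym.legendreSym.to_jacobiSym, recip n l hno hnsf hlo]
      have e1 : ∏ q ∈ Qs n, chi q l = ((∏ q ∈ Qs n, v' q : ℤˣ) : ℤ) := by
        push_cast
        exact Finset.prod_congr rfl fun q hq => hlv q (hQ hq)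
      have e2 : (∏ p : P, if p.1 ∈ Qs n then v p else 1) = ∏ q ∈ Qs n, v' q := by
        have e3 : (∏ p : P, if p.1 ∈ Qs n then v p else 1)
            = ∏ p : P, (fun q => if q ∈ Qs n then v' q else 1) p.1 := by
          apply Finset.prod_congr rfl
          rintro ⟨p, hp⟩ _
          simp [v', hp]
        rw [e3, Finset.prod_coe_sort P (fun q => if q ∈ Qs n then v' q else 1),
          Finset.prod_ite_mem, Finset.inter_eq_right.mpr hQ]
      rw [e1, ← e2, hv]
      rfl
    obtain ⟨a1, b1⟩ := hsq n₁ hn₁ (by omega) ho₁ hsf₁ Finset.subset_union_left hv₁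
    obtain ⟨a2, b2⟩ := hsq n₂ hn₂ (by omega) ho₂ hsf₂ Finset.subset_union_right hv₂
    obtain ⟨L, hL⟩ := h.exists_ideal l hlp (by omega) a1 a2 b1 b2
    have hL0 : L ∈ nonZeroDivisors (Ideal (𝓞 K)) := by
      rw [mem_nonZeroDivisors_iff_ne_zero]
      rintro rfl
      simp at hL
      exact hlp.ne_zero hL.symm
    refine ⟨_, l, ⟨L, hL0⟩, hlp, ?_, hL, ?_, rfl⟩
    · intro hlP
      have := Finset.single_le_sum (f := fun p : ℕ => p) (fun _ _ => Nat.zero_le _) hlP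
      omega
    · rintro ⟨p, hp⟩
      rw [hlv p hp]
      simp [v', hp]
  · rintro v w x ⟨l, L, hl, hlP, hL, hv, hx⟩ ⟨l', L', hl', hlP', hL', hw, hx'⟩
    rw [hx, QuotientGroup.eq] at hx'
    obtain ⟨c, hc⟩ := hx'
    obtain ⟨J, hJ⟩ := ClassGroup.mk0_surjective ((ClassGroup.mk0 L * c)⁻¹)
    have hprin : ClassGroup.mk0 (L * L' * J ^ 2) = 1 := by
      have hc' : c ^ 2 = (ClassGroup.mk0 L)⁻¹ * ClassGroup.mk0 L' := hc
      have hc'' : ClassGroup.mk0 L' = ClassGroup.mk0 L * c ^ 2 := by rw [hc']; group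
      rw [map_mul, map_mul, map_pow, hJ, hc'', inv_pow, mul_pow, ← mul_assoc, ← sq, mul_inv_cancel]
    have hpr := principal_of_mk0 _ hprin
    obtain ⟨α, hα⟩ := hpr
    have hnorm := congrArg Ideal.absNorm hα
    rw [Ideal.submodule_span_eq, Ideal.absNorm_span_singleton] at hnorm
    simp only [Submonoid.coe_mul, SubmonoidClass.coe_pow, map_mul, map_pow, hL, hL'] at hnorm
    set m : ℕ := Ideal.absNorm (J : Ideal (𝓞 K)) with hm
    have hm0 : (m : ℤ) ≠ 0 := by
      have := nonZeroDivisors.ne_zero J.2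
      rw [hm, Nat.cast_ne_zero, Ne, Ideal.absNorm_eq_zero_iff]
      exact this
    have hN := h.norm (α : K)
    rw [← Algebra.coe_norm_int] at hN
    have hkey : ∀ ε : ℤ, IsUnit ε → Algebra.norm ℤ α = ε * (l * l' * m ^ 2) →
        ∀ p ∈ P, chi p (ε * (l * l')) = 1 := by
      intro ε hε hεN p hp
      have hpp := hPprime p hp
      have hpI := Nat.prime_iff_prime_int.mp hpp
      have hnd : ¬ (p : ℤ) ∣ ε * (l * l') := by
        intro hd
        rcases hpI.dvd_or_dvd hd with hd | hd
        · exact hpI.not_isUnit (isUnit_of_dvd_unit hd hε)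
        · have hd : p ∣ l * l' := by exact_mod_cast hd
          rcases hpp.dvd_mul.mp hd with hd | hd
          · rw [Nat.prime_dvd_prime_iff_eq hpp hl] at hd
            exact hlP (hd ▸ hp)
          · rw [Nat.prime_dvd_prime_iff_eq hpp hl'] at hd
            exact hlP' (hd ▸ hp)
      have hrw : ((m : ℤ) ^ 2 * (ε * (l * l'))) = Algebra.norm ℤ α := by rw [hεN]; ring
      rcases Finset.mem_union.mp hp with hp | hp
      · obtain ⟨A, B, hAB⟩ := hN.1
        exact chi_norm n₁ p ho₁ hsf₁ hp _ m hnd hm0 A B (by rw [hrw]; exact_mod_cast hAB)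
      · obtain ⟨A, B, hAB⟩ := hN.2
        exact chi_norm n₂ p ho₂ hsf₂ hp _ m hnd hm0 A B (by rw [hrw]; exact_mod_cast hAB)
    have hnat : ((Algebra.norm ℤ α).natAbs : ℤ) = l * l' * m ^ 2 := by
      rw [← hnorm]; push_cast; rfl
    rcases Int.natAbs_eq (Algebra.norm ℤ α) with hs | hs
    · left
      have := hkey 1 isUnit_one (by rw [hs, hnat]; ring)
      funext p
      have h1 := this p.1 p.2
      rw [one_mul, chi_mul, hv p, hw p] at h1
      have h2 : v p * w p = 1 := Units.ext (by push_cast; exact h1)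
      exact (mul_eq_one_iff_eq_inv.mp h2).trans (Int.units_inv_eq_self _)
    · right
      have := hkey (-1) isUnit_one.neg (by rw [hs, hnat]; ring)
      funext p
      have h1 := this p.1 p.2
      rw [chi_mul, chi_mul, hv p, hw p, he p] at h1
      have h2 : e p * (v p * w p) = 1 := Units.ext (by push_cast; exact h1)
      rw [← mul_assoc] at h2
      have h3 := (mul_eq_one_iff_eq_inv.mp h2).trans (Int.units_inv_eq_self _)
      rw [Pi.mul_apply, ← h3, mul_comm, ← mul_assoc, Int.units_mul_self, one_mul]

theorem biquad_BQ (d₁ d₂ : ℤ) [NumberField (biquad d₁ d₂)]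
    (hdeg : Module.finrank ℚ (biquad d₁ d₂) = 4) :
    ∃ (s t : biquad d₁ d₂) (b : Module.Basis (Fin 4) ℚ (biquad d₁ d₂)),
      BQ (biquad d₁ d₂) d₁ d₂ s t b := by
  obtain ⟨s, hs⟩ := IsAlgClosed.exists_pow_nat_eq (d₁ : ℂ) two_pos
  obtain ⟨t, ht⟩ := IsAlgClosed.exists_pow_nat_eq (d₂ : ℂ) two_pos
  have hsm : s ∈ biquad d₁ d₂ := IntermediateField.subset_adjoin _ _ (Or.inl hs)
  have htm : t ∈ biquad d₁ d₂ := IntermediateField.subset_adjoin _ _ (Or.inr ht)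
  have halg : (biquad d₁ d₂).toSubalgebra =
      Algebra.adjoin ℚ {x : ℂ | x ^ 2 = (d₁ : ℂ) ∨ x ^ 2 = (d₂ : ℂ)} := by
    apply IntermediateField.adjoin_toSubalgebra_of_isAlgebraic
    intro x hx
    apply IsAlgebraic.of_pow (n := 2) two_pos
    rcases hx with hx | hx <;> rw [hx]
    · exact isAlgebraic_intCast d₁
    · exact isAlgebraic_intCast d₂
  have hspan : ∀ x ∈ biquad d₁ d₂, ∃ p q r u : ℚ,
      x = (p : ℂ) + q * s + r * t + u * (s * t) := by
    intro x hx
    have hx' : x ∈ Algebra.adjoin ℚ {x : ℂ | x ^ 2 = (d₁ : ℂ) ∨ x ^ 2 = (d₂ : ℂ)} := by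
      rw [← halg]; exact hx
    induction hx' using Algebra.adjoin_induction with
    | mem y hy =>
      rcases hy with hy | hy
      · rw [← hs] at hy
        rcases sq_eq_sq_iff_eq_or_eq_neg.mp hy with rfl | rfl
        · exact ⟨0, 1, 0, 0, by simp⟩
        · exact ⟨0, -1, 0, 0, by simp⟩
      · rw [← ht] at hy
        rcases sq_eq_sq_iff_eq_or_eq_neg.mp hy with rfl | rfl
        · exact ⟨0, 0, 1, 0, by simp⟩
        · exact ⟨0, 0, -1, 0, by simp⟩
    | algebraMap r => exact ⟨r, 0, 0, 0, by simp⟩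
    | add y z hy hz ihy ihz =>
      rw [← halg] at hy hz
      obtain ⟨p, q, r, u, rfl⟩ := ihy hy
      obtain ⟨p', q', r', u', rfl⟩ := ihz hz
      exact ⟨p + p', q + q', r + r', u + u', by push_cast; ring⟩
    | mul y z hy hz ihy ihz =>
      rw [← halg] at hy hz
      obtain ⟨p, q, r, u, rfl⟩ := ihy hy
      obtain ⟨p', q', r', u', rfl⟩ := ihz hz
      refine ⟨p * p' + d₁ * q * q' + d₂ * r * r' + d₁ * d₂ * u * u',
        p * q' + q * p' + d₂ * (r * u' + u * r'),
        p * r' + r * p' + d₁ * (q * u' + u * q'),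
        p * u' + u * p' + q * r' + r * q', ?_⟩
      push_cast
      rw [← hs, ← ht]
      ring
  let S : biquad d₁ d₂ := ⟨s, hsm⟩
  let T : biquad d₁ d₂ := ⟨t, htm⟩
  have htop : ⊤ ≤ Submodule.span ℚ (Set.range ![(1 : biquad d₁ d₂), S, T, S * T]) := by
    rintro ⟨x, hx⟩ _
    obtain ⟨p, q, r, u, hxe⟩ := hspan x hx
    rw [Submodule.mem_span_range_iff_exists_fun]
    refine ⟨![p, q, r, u], ?_⟩
    apply Subtype.ext
    simp [Fin.sum_univ_four, hxe, Rat.smul_def, S, T]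
  refine ⟨S, T, basisOfTopLeSpanOfCardEqFinrank _ htop (by rw [hdeg]; rfl), ?_, ?_, ?_, ?_, ?_, ?_⟩
  · apply Subtype.ext; push_cast; exact hs
  · apply Subtype.ext; push_cast; exact ht
  all_goals simp

theorem stmt5 (d₁ d₂ : ℤ) (hsf₁ : Squarefree d₁) (hsf₂ : Squarefree d₂)
    (hodd₁ : Odd d₁) (hodd₂ : Odd d₂) (hpos₁ : 0 < d₁) (hpos₂ : 0 < d₂)
    (hne : d₁ ≠ d₂) (h1 : d₁ ≠ 1) (h2 : d₂ ≠ 1) (hnsq : ¬ IsSquare (d₁ * d₂))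
    [NumberField (biquad d₁ d₂)]
    (hdeg : Module.finrank ℚ (biquad d₁ d₂) = 4)
    (homega : 3 ≤ (NumberField.discr (biquad d₁ d₂)).natAbs.primeFactors.card) :
    ∃ f : Multiplicative
        (Fin ((NumberField.discr (biquad d₁ d₂)).natAbs.primeFactors.card - 3) → ZMod 2) →*
        ClassGroup (𝓞 (biquad d₁ d₂)),
      Function.Injective f := by
  obtain ⟨s, t, b, h⟩ := biquad_BQ d₁ d₂ hdeg
  have e₁ : ((d₁.natAbs : ℕ) : ℤ) = d₁ := Int.natAbs_of_nonneg hpos₁.le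
  have e₂ : ((d₂.natAbs : ℕ) : ℤ) = d₂ := Int.natAbs_of_nonneg hpos₂.le
  have h' : BQ (biquad d₁ d₂) (d₁.natAbs : ℕ) (d₂.natAbs : ℕ) s t b := by
    rw [e₁, e₂]; exact h
  exact h'.main (Int.natAbs_odd.mpr hodd₁) (Int.natAbs_odd.mpr hodd₂)
    (Int.squarefree_natAbs.mpr hsf₁) (Int.squarefree_natAbs.mpr hsf₂) homega
end
end
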